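/- arXiv:1410.6867 — 2 statements merged into one kernel-verified Lean document; each statement's English description precedes it below -/
import Mathlib

section
/- Let p be a prime and G a finite abelian group such that p is 2-small with respect to exp(G). Then for all positive integers m and n, k(C_{p^m} ⊕ C_{p^n} ⊕ G) = k(C_{p^m}) + k(C_{p^n}) + k(G). -/
/-- The cross number `k(S)` of a sequence (finite multiset) `S` over an additive group:
the sum, with multiplicity, of the reciprocals of the orders of its elements. -/
noncomputable def crossNum {G : Type*} [AddCommGroup G] (S : Multiset G) : ℝ :=
  (S.map fun g => ((addOrderOf g : ℝ))⁻¹).sum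

/-- `S` is zero-sum free: no nonempty sub-multiset of `S` has sum `0`. -/
def IsZeroSumFree {G : Type*} [AddCommGroup G] (S : Multiset G) : Prop :=
  ∀ T : Multiset G, T ≤ S → T ≠ 0 → T.sum ≠ 0

/-- The little cross number `k(G)`: the maximal cross number of a zero-sum free
sequence over `G`. -/
noncomputable def littleK (G : Type*) [AddCommGroup G] : ℝ :=
  sSup {x : ℝ | ∃ S : Multiset G, IsZeroSumFree S ∧ crossNum S = x}

/-- A prime `p` is 2-small with respect to `n` (written `p ≺² n`) if `p ∤ n` and
`(2p+2)/(2p+1) > ∑_{d ∣ n} 1/d`. -/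
def TwoSmall (p n : ℕ) : Prop :=
  ¬ p ∣ n ∧ ((2 * p + 2 : ℚ) / (2 * p + 1)) > ∑ d ∈ n.divisors, (1 : ℚ) / d

section basics

variable {G H : Type*} [AddCommGroup G] [AddCommGroup H]

lemma cn_zero : crossNum (0 : Multiset G) = 0 := by simp [crossNum]

lemma cn_cons (a : G) (S : Multiset G) :
    crossNum (a ::ₘ S) = ((addOrderOf a : ℝ))⁻¹ + crossNum S := by simp [crossNum]

lemma cn_add (S T : Multiset G) : crossNum (S + T) = crossNum S + crossNum T := by
  simp [crossNum]

lemma cn_nonneg (S : Multiset G) : 0 ≤ crossNum S := by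
  induction S using Multiset.induction_on with
  | empty => simp [cn_zero]
  | cons a S ih => rw [cn_cons]; positivity

lemma zsf_mono {S T : Multiset G} (h : S ≤ T) (hT : IsZeroSumFree T) : IsZeroSumFree S :=
  fun U hU => hT U (hU.trans h)

/-- sub-multisets of a mapped multiset come from sub-multisets. -/
lemma exists_of_le_map {α β : Type*} (f : α → β) (S : Multiset α) :
    ∀ T : Multiset β, T ≤ S.map f → ∃ T', T' ≤ S ∧ T'.map f = T := by
  classical
  induction S using Multiset.induction_on with
  | empty =>
    intro T hT
    exact ⟨0, le_rfl, by simpa using (by simpa using hT : T = 0).symm⟩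
  | cons a S ih =>
    intro T hT
    rw [Multiset.map_cons] at hT
    by_cases ha : f a ∈ T
    · obtain ⟨T0, rfl⟩ := Multiset.exists_cons_of_mem ha
      obtain ⟨T', h1, h2⟩ := ih T0 ((Multiset.cons_le_cons_iff _).1 hT)
      exact ⟨a ::ₘ T', (Multiset.cons_le_cons_iff _).2 h1, by simp [h2]⟩
    · obtain ⟨T', h1, h2⟩ := ih T ((Multiset.le_cons_of_notMem ha).1 hT)
      exact ⟨T', h1.trans (Multiset.le_cons_self _ _), h2⟩

/-- sub-multisets of a sum split. -/
lemma exists_of_le_add {α : Type*} (A B T : Multiset α) (h : T ≤ A + B) :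
    ∃ T1 T2, T1 ≤ A ∧ T2 ≤ B ∧ T = T1 + T2 := by
  classical
  refine ⟨T ∩ A, T - T ∩ A, Multiset.inter_le_right, ?_, ?_⟩
  · rw [Multiset.le_iff_count] at h ⊢
    intro a
    have := h a
    simp only [Multiset.count_sub, Multiset.count_inter, Multiset.count_add] at *
    omega
  · rw [add_tsub_cancel_of_le Multiset.inter_le_left]

end basics

section nil

/-- Vanishing threshold in characteristic `p`. -/
def NilT (p : ℕ) (P : Type) [AddCommGroup P] (q : ℕ) (κ : ℝ) : Prop :=
  ∀ (A : Type) [CommRing A] [CharP A p] (χ : Multiplicative P →* A) (S : Multiset P),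
    (∀ a ∈ S, q • a = 0) → κ < crossNum S →
    (S.map fun a => χ (Multiplicative.ofAdd a) - 1).prod = 0

lemma nilT_prod {p : ℕ} {P1 P2 : Type} [AddCommGroup P1] [AddCommGroup P2] [Finite P1] [Finite P2]
    {q : ℕ}
    {κ1 κ2 : ℝ} (h1 : NilT p P1 q κ1) (h2 : NilT p P2 q κ2) :
    NilT p (P1 × P2) q (κ1 + κ2) := by
  intro A _ _ χ S hS hk
  let χ1 : Multiplicative P1 →* A := χ.comp (AddMonoidHom.toMultiplicative (AddMonoidHom.inl P1 P2))
  let χ2 : Multiplicative P2 →* A := χ.comp (AddMonoidHom.toMultiplicative (AddMonoidHom.inr P1 P2))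
  have hχ : ∀ a : P1 × P2, χ (Multiplicative.ofAdd a) - 1
      = (χ1 (Multiplicative.ofAdd a.1) - 1) * χ2 (Multiplicative.ofAdd a.2)
        + (χ2 (Multiplicative.ofAdd a.2) - 1) := by
    intro a
    have : χ (Multiplicative.ofAdd a)
        = χ1 (Multiplicative.ofAdd a.1) * χ2 (Multiplicative.ofAdd a.2) := by
      simp only [χ1, χ2, MonoidHom.comp_apply]
      rw [← map_mul]
      congr 1
      apply Multiplicative.toAdd.injective
      ext <;> simp
    rw [this]; ring
  -- generalized statement
  have key : ∀ (S : Multiset (P1 × P2)) (U1 : Multiset P1) (U2 : Multiset P2),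
      (∀ a ∈ S, q • a = 0) → (∀ a ∈ U1, q • a = 0) → (∀ a ∈ U2, q • a = 0) →
      κ1 + κ2 < crossNum S + crossNum U1 + crossNum U2 →
      (S.map fun a => χ (Multiplicative.ofAdd a) - 1).prod *
        ((U1.map fun a => χ1 (Multiplicative.ofAdd a) - 1).prod *
        (U2.map fun a => χ2 (Multiplicative.ofAdd a) - 1).prod) = 0 := by
    intro S
    induction S using Multiset.induction_on with
    | empty =>
      intro U1 U2 _ hU1 hU2 hk
      rw [cn_zero, zero_add] at hk
      rcases lt_or_ge κ1 (crossNum U1) with h | h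
      · rw [h1 A χ1 U1 hU1 h]; simp
      · rw [h2 A χ2 U2 hU2 (by linarith)]; simp
    | cons a S ih =>
      intro U1 U2 hS hU1 hU2 hk
      have ha : q • a = 0 := hS a (by simp)
      have ha1 : q • a.1 = 0 := by simpa using congrArg Prod.fst ha
      have ha2 : q • a.2 = 0 := by simpa using congrArg Prod.snd ha
      have hS' : ∀ a ∈ S, q • a = 0 := fun b hb => hS b (Multiset.mem_cons_of_mem hb)
      have o1 : ((addOrderOf a : ℝ))⁻¹ ≤ ((addOrderOf a.1 : ℝ))⁻¹ := by
        have : addOrderOf a.1 ∣ addOrderOf a := by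
          rw [Prod.addOrderOf]; exact Nat.dvd_lcm_left _ _
        have h0 : 0 < addOrderOf a.1 := addOrderOf_pos _
        have := Nat.le_of_dvd (addOrderOf_pos a) this
        gcongr
      have o2 : ((addOrderOf a : ℝ))⁻¹ ≤ ((addOrderOf a.2 : ℝ))⁻¹ := by
        have : addOrderOf a.2 ∣ addOrderOf a := by
          rw [Prod.addOrderOf]; exact Nat.dvd_lcm_right _ _
        have h0 : 0 < addOrderOf a.2 := addOrderOf_pos _
        have := Nat.le_of_dvd (addOrderOf_pos a) this
        gcongr
      rw [cn_cons] at hk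
      have e1 := ih (a.1 ::ₘ U1) U2 hS' (by
        intro b hb; rcases Multiset.mem_cons.1 hb with rfl | hb
        · exact ha1
        · exact hU1 b hb) hU2 (by rw [cn_cons]; linarith)
      have e2 := ih U1 (a.2 ::ₘ U2) hS' hU1 (by
        intro b hb; rcases Multiset.mem_cons.1 hb with rfl | hb
        · exact ha2
        · exact hU2 b hb) (by rw [cn_cons]; linarith)
      simp only [Multiset.map_cons, Multiset.prod_cons] at e1 e2 ⊢
      rw [hχ a]
      linear_combination χ2 (Multiplicative.ofAdd a.2) * e1 + e2
  simpa using key S 0 0 hS (by simp) (by simp) (by simpa [cn_zero] using hk)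

lemma nilT_zmod {p : ℕ} (hp : p.Prime) (m q : ℕ) (hq : 0 < q) :
    NilT p (ZMod (p ^ m)) q (1 - (q : ℝ)⁻¹) := by
  intro A _ _ χ S hS hk
  have : Fact p.Prime := ⟨hp⟩
  have : NeZero (p ^ m) := ⟨pow_ne_zero _ hp.ne_zero⟩
  set x := χ (Multiplicative.ofAdd 1) with hx
  have hval : ∀ a : ZMod (p ^ m), χ (Multiplicative.ofAdd a) = x ^ a.val := by
    intro a
    rw [hx, ← map_pow, ← ofAdd_nsmul]
    simp
  have hx1 : x ^ (p ^ m) = 1 := by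
    rw [hx, ← map_pow, ← ofAdd_nsmul]
    simp
  have hx0 : (x - 1) ^ (p ^ m) = 0 := by
    rw [sub_pow_char_pow, hx1]; simp
  have hord : ∀ a : ZMod (p ^ m), addOrderOf a ∣ p ^ m := by
    intro a
    rw [addOrderOf_dvd_iff_nsmul_eq_zero]; simp
  have hdiv : ∀ a : ZMod (p ^ m),
      (x - 1) ^ (p ^ m / addOrderOf a) ∣ χ (Multiplicative.ofAdd a) - 1 := by
    intro a
    obtain ⟨j, hj, hja⟩ := (Nat.dvd_prime_pow hp).1 (hord a)
    rw [hval, hja, Nat.pow_div hj hp.pos]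
    have h1 : p ^ (m - j) ∣ a.val := by
      have h2 : p ^ m ∣ p ^ j * a.val := by
        rw [← ZMod.natCast_eq_zero_iff]
        have := addOrderOf_nsmul_eq_zero a
        rw [hja, nsmul_eq_mul] at this
        push_cast
        simpa using this
      have h3 : p ^ m = p ^ j * p ^ (m - j) := by rw [← pow_add]; congr 1; omega
      have h4 : p ^ j * p ^ (m - j) ∣ p ^ j * a.val := h3 ▸ h2
      exact Nat.dvd_of_mul_dvd_mul_left (pow_pos hp.pos _) h4
    obtain ⟨t, ht⟩ := h1
    rw [ht, mul_comm, pow_mul]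
    have : (x ^ t) ^ p ^ (m - j) - 1 = (x ^ t - 1) ^ p ^ (m - j) := by
      rw [sub_pow_char_pow]; simp
    rw [this]
    exact pow_dvd_pow_of_dvd (by simpa using sub_dvd_pow_sub_pow x 1 t) _
  have hprod : ∀ S : Multiset (ZMod (p ^ m)),
      (x - 1) ^ ((S.map fun a => p ^ m / addOrderOf a).sum) ∣
        (S.map fun a => χ (Multiplicative.ofAdd a) - 1).prod := by
    intro S
    induction S using Multiset.induction_on with
    | empty => simp
    | cons a S ih =>
      simp only [Multiset.map_cons, Multiset.sum_cons, Multiset.prod_cons, pow_add]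
      exact mul_dvd_mul (hdiv a) ih
  have hsum : ∀ (r : ℕ) (S : Multiset (ZMod (p ^ m))), (∀ a ∈ S, addOrderOf a ∣ r) → 0 < r →
      (((S.map fun a => r / addOrderOf a).sum : ℕ) : ℝ) = r * crossNum S := by
    intro r S hS hr
    induction S using Multiset.induction_on with
    | empty => simp [cn_zero]
    | cons a S ih =>
      rw [Multiset.map_cons, Multiset.sum_cons, cn_cons, Nat.cast_add,
        ih (fun b hb => hS b (Multiset.mem_cons_of_mem hb)),
        Nat.cast_div (hS a (by simp)) (by
          have := addOrderOf_pos a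
          positivity)]
      ring
  have hq1 : ∀ a ∈ S, addOrderOf a ∣ q := fun a ha =>
    addOrderOf_dvd_iff_nsmul_eq_zero.2 (hS a ha)
  have h1 : (1 : ℝ) ≤ crossNum S := by
    have e := hsum q S hq1 hq
    have hq' : (0 : ℝ) < q := by exact_mod_cast hq
    have : (q : ℝ) - 1 < q * crossNum S := by
      have := mul_lt_mul_of_pos_left hk hq'
      rw [mul_sub, mul_inv_cancel₀ hq'.ne'] at this
      linarith
    rw [← e] at this
    have h3 : q ≤ (S.map fun a => q / addOrderOf a).sum := by
      have : (q : ℝ) < ((S.map fun a => q / addOrderOf a).sum : ℕ) + 1 := by linarith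
      have : q < (S.map fun a => q / addOrderOf a).sum + 1 := by exact_mod_cast this
      omega
    have h4 : (q : ℝ) ≤ q * crossNum S := by rw [← e]; exact_mod_cast h3
    by_contra hlt
    push Not at hlt
    nlinarith
  have h2 : p ^ m ≤ (S.map fun a => p ^ m / addOrderOf a).sum := by
    have e := hsum (p ^ m) S (fun a _ => hord a) (pow_pos hp.pos _)
    have : ((p ^ m : ℕ) : ℝ) ≤ ((S.map fun a => p ^ m / addOrderOf a).sum : ℕ) := by
      rw [e]
      have : (0 : ℝ) ≤ ((p ^ m : ℕ) : ℝ) := by positivity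
      nlinarith
    exact_mod_cast this
  have h3 := (pow_dvd_pow (x - 1) h2).trans (hprod S)
  rw [hx0] at h3
  exact zero_dvd_iff.1 h3

lemma nilT_zmod_zero {p : ℕ} (hp : p.Prime) (m : ℕ) :
    NilT p (ZMod (p ^ m)) 0 (1 - ((p ^ m : ℕ) : ℝ)⁻¹) := by
  intro A _ _ χ S _ hk
  exact nilT_zmod hp m (p ^ m) (pow_pos hp.pos _) A χ S (by intro a _; simp) hk

end nil

section delta

variable {p : ℕ} {P : Type} [AddCommGroup P]

/-- Iterated difference operators. -/
def dl {p : ℕ} {P : Type} [AddCommGroup P] : List P → (P → ZMod p) → (P → ZMod p)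
  | [], Q => Q
  | a :: L, Q => dl L (fun x => Q (x + a) - Q x)

/-- `Q` has degree at most `ε`. -/
def DegLE {p : ℕ} {P : Type} [AddCommGroup P] (Q : P → ZMod p) (ε : ℝ) : Prop :=
  ∀ L : List P, ε < crossNum (L : Multiset P) → ∀ x, dl L Q x = 0

lemma dl_lift (Q : P → ZMod p) (L : List P) : ∀ (x : P),
    dl L Q x = AddMonoidAlgebra.liftNC (AddMonoidHom.id (ZMod p))
      (fun a : Multiplicative P => Q a.toAdd)
      (AddMonoidAlgebra.of (ZMod p) P (Multiplicative.ofAdd x) *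
        ((L : Multiset P).map fun a =>
          AddMonoidAlgebra.of (ZMod p) P (Multiplicative.ofAdd a) - 1).prod) := by
  induction L generalizing Q with
  | nil => intro x; simp [dl]
  | cons a L ih =>
    intro x
    rw [dl, ih]
    rw [← Multiset.cons_coe, Multiset.map_cons, Multiset.prod_cons, ← mul_assoc]
    generalize ((L : Multiset P).map fun a =>
          AddMonoidAlgebra.of (ZMod p) P (Multiplicative.ofAdd a) - 1).prod = u
    have : ∀ (R : P → ZMod p) (y : P), AddMonoidAlgebra.liftNC (AddMonoidHom.id (ZMod p))
      (fun a : Multiplicative P => R a.toAdd)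
      (AddMonoidAlgebra.of (ZMod p) P (Multiplicative.ofAdd y) * u) =
      AddMonoidAlgebra.liftNC (AddMonoidHom.id (ZMod p))
      (fun a : Multiplicative P => R (y + a.toAdd)) u := by
      intro R y
      induction u using AddMonoidAlgebra.induction_linear with
      | zero => simp
      | add f g hf hg => rw [mul_add, map_add, map_add, hf, hg]
      | single a b => simp [AddMonoidAlgebra.single_mul_single]
    rw [mul_sub, mul_one, ← map_mul, sub_mul, map_sub, ← ofAdd_add, this Q, this Q, this (fun x => Q (x + a) - Q x)]
    clear this
    induction u using AddMonoidAlgebra.induction_linear with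
    | zero => simp
    | add f g hf hg => simp only [map_add]; rw [hf, hg]; ring
    | single c b =>
      simp only [AddMonoidAlgebra.liftNC_single, AddMonoidHom.id_apply, toAdd_ofAdd]
      rw [mul_sub]
      congr 3
      abel_nf

lemma nilT_dl (hp : p.Prime) {q : ℕ} {κ : ℝ} (h : NilT p P q κ) (Q : P → ZMod p) (L : List P)
    (hL : ∀ a ∈ L, q • a = 0) (hk : κ < crossNum (L : Multiset P)) (x : P) : dl L Q x = 0 := by
  have : Fact p.Prime := ⟨hp⟩
  rw [dl_lift]
  have : CharP (AddMonoidAlgebra (ZMod p) P) p := charP_of_injective_algebraMap (algebraMap (ZMod p) (AddMonoidAlgebra (ZMod p) P)).injective p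
  rw [h (AddMonoidAlgebra (ZMod p) P) (AddMonoidAlgebra.of (ZMod p) P) (L : Multiset P)
    (by simpa using hL) hk]
  simp

lemma dl_ne_zero (L : List P) : ∀ (Q : P → ZMod p), Q 0 ≠ 0 →
    (∀ T : Multiset P, T ≤ (L : Multiset P) → T ≠ 0 → Q T.sum = 0) → dl L Q 0 ≠ 0 := by
  induction L with
  | nil => intro Q h _; exact h
  | cons a L ih =>
    intro Q h hT
    rw [dl]
    rw [← Multiset.cons_coe] at hT
    apply ih
    · have := hT {a} (by simp) (by simp)
      simp at this
      simpa [this] using h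
    · intro T h1 h2
      have e1 := hT T (h1.trans (Multiset.le_cons_self _ _)) h2
      have e2 := hT (a ::ₘ T) ((Multiset.cons_le_cons_iff _).2 h1) (by simp)
      rw [Multiset.sum_cons, add_comm] at e2
      simp [e1, e2]

/-- Davenport type bound. -/
lemma dav (hp : p.Prime) {q : ℕ} {κ : ℝ} (h : NilT p P q κ) (S : Multiset P)
    (hS : ∀ a ∈ S, q • a = 0) (hk : κ < crossNum S) :
    ∃ T, T ≤ S ∧ T ≠ 0 ∧ T.sum = 0 := by
  classical
  have : Fact p.Prime := ⟨hp⟩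
  by_contra hcon
  push Not at hcon
  obtain ⟨L, rfl⟩ := Quot.exists_rep S
  refine dl_ne_zero L (fun x : P => if x = 0 then (1 : ZMod p) else 0) (by simp) ?_
    (nilT_dl hp h _ L (by simpa using hS) hk 0)
  intro T h1 h2
  simp [hcon T h1 h2]

end delta

section davenport

/-- The two combinatorial properties of `P` which are used. -/
def PropD (P : Type) [AddCommGroup P] : Prop :=
  ∀ S : Multiset P, 2 ≤ crossNum S → ∃ T, T ≤ S ∧ T ≠ 0 ∧ T.sum = 0

def PropE (P : Type) [AddCommGroup P] : Prop :=
  ∀ S : Multiset P, 3 ≤ crossNum S → ∃ T, T ≤ S ∧ T ≠ 0 ∧ T.sum = 0 ∧ crossNum T ≤ 1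

variable {p : ℕ} {P : Type} [AddCommGroup P] [Finite P]

lemma natsum_eq {G : Type*} [AddCommGroup G] [Finite G] (r : ℕ) (S : Multiset G)
    (hS : ∀ a ∈ S, addOrderOf a ∣ r) :
    (((S.map fun a => r / addOrderOf a).sum : ℕ) : ℝ) = r * crossNum S := by
  induction S using Multiset.induction_on with
  | empty => simp [cn_zero]
  | cons a S ih =>
    rw [Multiset.map_cons, Multiset.sum_cons, cn_cons, Nat.cast_add,
      ih (fun b hb => hS b (Multiset.mem_cons_of_mem hb)),
      Nat.cast_div (hS a (by simp)) (by
        have := addOrderOf_pos a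
        positivity)]
    ring

/-- Zero-sum subsequences of integral cross number. -/
lemma exists_int (hp : p.Prime) (N : ℕ) (hP : ∀ q, 0 < q → NilT p P q (2 * (1 - (q : ℝ)⁻¹)))
    (S : Multiset P) (hS : ∀ a ∈ S, p ^ N • a = 0)
    (hk : 3 * (1 - ((p ^ N : ℕ) : ℝ)⁻¹) < crossNum S) :
    ∃ T, T ≤ S ∧ T ≠ 0 ∧ T.sum = 0 ∧ ∃ c : ℕ, crossNum T = c := by
  have hq : 0 < p ^ N := pow_pos hp.pos _
  have : NeZero (p ^ N) := ⟨hq.ne'⟩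
  have hN : NilT p (P × ZMod (p ^ N)) (p ^ N) (2 * (1 - ((p ^ N : ℕ) : ℝ)⁻¹) + (1 - ((p ^ N : ℕ) : ℝ)⁻¹)) :=
    nilT_prod (hP _ hq) (nilT_zmod hp N (p ^ N) hq)
  let f : P → P × ZMod (p ^ N) := fun a => (a, ((p ^ N / addOrderOf a : ℕ) : ZMod (p ^ N)))
  have hord : ∀ a ∈ S, addOrderOf a ∣ p ^ N := fun a ha =>
    addOrderOf_dvd_iff_nsmul_eq_zero.2 (hS a ha)
  have hf : ∀ a ∈ S, addOrderOf (f a) ∣ addOrderOf a := by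
    intro a ha
    rw [addOrderOf_dvd_iff_nsmul_eq_zero]
    ext
    · simp [f]
    · have e : addOrderOf a * (p ^ N / addOrderOf a) = p ^ N := Nat.mul_div_cancel' (hord a ha)
      have : ((addOrderOf a * (p ^ N / addOrderOf a) : ℕ) : ZMod (p ^ N)) = 0 := by
        rw [e]; simp
      simp only [f, Prod.smul_snd, nsmul_eq_mul, Prod.snd_zero]
      rw [← Nat.cast_mul, this]
  have hk' : crossNum S ≤ crossNum (S.map f) := by
    have : ∀ S' : Multiset P, S' ≤ S → crossNum S' ≤ crossNum (S'.map f) := by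
      intro S'
      induction S' using Multiset.induction_on with
      | empty => simp [cn_zero]
      | cons a S' ih =>
        intro h
        rw [Multiset.map_cons, cn_cons, cn_cons]
        have h1 := ih ((Multiset.le_cons_self _ _).trans h)
        have h2 := hf a (Multiset.mem_of_le h (by simp))
        have h3 := Nat.le_of_dvd (addOrderOf_pos a) h2
        have h4 : 0 < addOrderOf (f a) := addOrderOf_pos _
        gcongr
    exact this S le_rfl
  obtain ⟨T0, h1, h2, h3⟩ := dav hp hN (S.map f) (by
    intro b hb
    obtain ⟨a, ha, rfl⟩ := Multiset.mem_map.1 hb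
    rw [← addOrderOf_dvd_iff_nsmul_eq_zero]
    exact (hf a ha).trans (hord a ha)) (by linarith)
  obtain ⟨T, hT, rfl⟩ := exists_of_le_map f S T0 h1
  have hsum : (T.map f).sum = (T.sum, (((T.map fun a => p ^ N / addOrderOf a).sum : ℕ) : ZMod (p ^ N))) := by
    clear hT h1 h2 h3
    induction T using Multiset.induction_on with
    | empty => simp; rfl
    | cons a T ih => simp only [Multiset.map_cons, Multiset.sum_cons, ih, f]; simp
  rw [hsum, Prod.mk_eq_zero] at h3
  refine ⟨T, hT, by rintro rfl; simp at h2, h3.1, ?_⟩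
  obtain ⟨c, hc⟩ := (ZMod.natCast_eq_zero_iff _ _).1 h3.2
  refine ⟨c, ?_⟩
  have e := natsum_eq (p ^ N) T (fun a ha => hord a (Multiset.mem_of_le hT ha))
  rw [hc, Nat.cast_mul] at e
  have : ((p ^ N : ℕ) : ℝ) ≠ 0 := by exact_mod_cast hq.ne'
  exact (mul_left_cancel₀ this e).symm

/-- An element of maximal order. -/
lemma exists_max (hp : p.Prime) (N : ℕ) (hN : ∀ a : P, p ^ N • a = 0) (T : Multiset P) (hT : T ≠ 0) :
    ∃ t ∈ T, ∃ j, addOrderOf t = p ^ j ∧ ∀ a ∈ T, p ^ j • a = 0 := by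
  classical
  obtain ⟨t, ht, hmax⟩ := T.toFinset.exists_max_image addOrderOf (by simpa [Finset.nonempty_iff_ne_empty] using hT)
  have hpow : ∀ a : P, ∃ j, addOrderOf a = p ^ j := by
    intro a
    obtain ⟨j, _, hj⟩ := (Nat.dvd_prime_pow hp).1 (addOrderOf_dvd_iff_nsmul_eq_zero.2 (hN a))
    exact ⟨j, hj⟩
  obtain ⟨j, hj⟩ := hpow t
  refine ⟨t, by simpa using ht, j, hj, ?_⟩
  intro a ha
  obtain ⟨i, hi⟩ := hpow a
  have := hmax a (by simpa using ha)
  rw [hi, hj] at this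
  rw [← addOrderOf_dvd_iff_nsmul_eq_zero, hi]
  exact pow_dvd_pow _ ((Nat.pow_le_pow_iff_right hp.one_lt).1 this)

lemma propE_of (hp : p.Prime) (N : ℕ) (hN : ∀ a : P, p ^ N • a = 0)
    (hP : ∀ q, 0 < q → NilT p P q (2 * (1 - (q : ℝ)⁻¹))) : PropE P := by
  classical
  intro S hS
  have hinv : ∀ j, (0 : ℝ) < ((p ^ j : ℕ) : ℝ)⁻¹ := fun j => by
    have := pow_pos hp.pos j
    positivity
  -- descending argument
  have main : ∀ n : ℕ, ∀ T : Multiset P, T.card = n → T ≠ 0 → T.sum = 0 →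
      (∃ c : ℕ, crossNum T = c) → ∃ T', T' ≤ T ∧ T' ≠ 0 ∧ T'.sum = 0 ∧ crossNum T' ≤ 1 := by
    intro n
    induction n using Nat.strong_induction_on with
    | _ n ih =>
      intro T hTn hT0 hTs hc
      obtain ⟨c, hc⟩ := hc
      obtain ⟨t, ht, j, htj, hj⟩ := exists_max hp N hN T hT0
      obtain ⟨U, rfl⟩ := Multiset.exists_cons_of_mem ht
      have hU : ∀ a ∈ U, p ^ j • a = 0 := fun a ha => hj a (Multiset.mem_cons_of_mem ha)
      have hcU : crossNum U = c - ((p ^ j : ℕ) : ℝ)⁻¹ := by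
        rw [cn_cons, htj] at hc; linarith
      have hpos := hinv j
      rcases Nat.lt_or_ge c 2 with h | h
      · refine ⟨_, le_rfl, hT0, hTs, ?_⟩
        rw [hc]
        exact_mod_cast Nat.lt_succ_iff.1 h
      rcases Nat.lt_or_ge c 3 with h' | h'
      · have : c = 2 := by omega
        subst this
        obtain ⟨T1, h1, h2, h3⟩ := dav hp (hP (p ^ j) (pow_pos hp.pos _)) U hU (by
          rw [hcU]; push_cast at hpos ⊢; linarith)
        obtain ⟨T2, rfl⟩ := Multiset.le_iff_exists_add.1 h1
        have hs : crossNum T1 + crossNum (t ::ₘ T2) = 2 := by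
          rw [← cn_add, Multiset.add_cons, hc]; norm_num
        rcases le_total (crossNum T1) 1 with h4 | h4
        · exact ⟨T1, h1.trans (Multiset.le_cons_self _ _), h2, h3, h4⟩
        · refine ⟨t ::ₘ T2, ?_, by simp, ?_, by linarith⟩
          · exact (Multiset.cons_le_cons_iff _).2 (Multiset.le_add_left _ _)
          · rw [Multiset.sum_cons, Multiset.sum_add, h3, zero_add] at hTs
            rw [Multiset.sum_cons, hTs]
      · have h3' : (3 : ℝ) ≤ c := by exact_mod_cast h'
        obtain ⟨T1, h1, h2, h3, h4⟩ := exists_int hp j hP U hU (by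
          rw [hcU]; linarith)
        obtain ⟨T', h5, h6⟩ := ih T1.card (by
          have := Multiset.card_le_card h1
          rw [Multiset.card_cons] at hTn
          omega) T1 rfl h2 h3 h4
        exact ⟨T', h5.trans (h1.trans (Multiset.le_cons_self _ _)), h6⟩
  obtain ⟨T, h1, h2, h3, h4⟩ := exists_int hp N hP S (fun a _ => hN a) (by
    have := hinv N
    linarith)
  obtain ⟨T', h5, h6⟩ := main _ T rfl h2 h3 h4
  exact ⟨T', h5.trans h1, h6⟩

lemma propD_of (hp : p.Prime) (N : ℕ) (hN : ∀ a : P, p ^ N • a = 0)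
    (hP : ∀ q, 0 < q → NilT p P q (2 * (1 - (q : ℝ)⁻¹))) : PropD P := by
  intro S hS
  have : (0 : ℝ) < ((p ^ N : ℕ) : ℝ)⁻¹ := by
    have := pow_pos hp.pos N
    positivity
  exact dav hp (hP (p ^ N) (pow_pos hp.pos _)) S (fun a _ => hN a) (by linarith)

lemma cn_map_val (H : AddSubgroup P) (S : Multiset H) :
    crossNum (S.map (Subtype.val)) = crossNum S := by
  induction S using Multiset.induction_on with
  | empty => simp [cn_zero]
  | cons a S ih => simp [cn_cons, ih]

lemma sum_map_val (H : AddSubgroup P) (S : Multiset H) :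
    (S.map (Subtype.val)).sum = (S.sum : P) :=
  (map_multiset_sum H.subtype S).symm

lemma PropD.sub (h : PropD P) (H : AddSubgroup P) : PropD H := by
  intro S hS
  obtain ⟨T0, h1, h2, h3⟩ := h (S.map Subtype.val) (by rwa [cn_map_val])
  obtain ⟨T, hT, rfl⟩ := exists_of_le_map _ S T0 h1
  rw [sum_map_val] at h3
  exact ⟨T, hT, by rintro rfl; simp at h2, by exact_mod_cast h3⟩

lemma PropE.sub (h : PropE P) (H : AddSubgroup P) : PropE H := by
  intro S hS
  obtain ⟨T0, h1, h2, h3, h4⟩ := h (S.map Subtype.val) (by rwa [cn_map_val])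
  obtain ⟨T, hT, rfl⟩ := exists_of_le_map _ S T0 h1
  rw [sum_map_val] at h3
  rw [cn_map_val] at h4
  exact ⟨T, hT, by rintro rfl; simp at h2, by exact_mod_cast h3, h4⟩

end davenport

section little

variable {G : Type*} [AddCommGroup G] [Finite G]

lemma cn_le_card (S : Multiset G) (h : IsZeroSumFree S) : crossNum S ≤ Nat.card G := by
  classical
  have := Fintype.ofFinite G
  have h1 : crossNum S = ∑ g : G, S.count g * ((addOrderOf g : ℝ))⁻¹ := by
    rw [crossNum, Finset.sum_multiset_map_count]
    rw [Finset.sum_subset (Finset.subset_univ _)]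
    · simp
    · intro g _ hg
      simp at hg
      simp [hg]
  rw [h1, Nat.card_eq_fintype_card]
  calc _ ≤ ∑ g : G, (1 : ℝ) := by
        apply Finset.sum_le_sum
        intro g _
        have hpos : 0 < addOrderOf g := addOrderOf_pos g
        have : S.count g < addOrderOf g := by
          by_contra hcon
          push Not at hcon
          apply h (Multiset.replicate (addOrderOf g) g) (Multiset.le_count_iff_replicate_le.1 hcon)
          · intro h0
            have := congrArg Multiset.card h0
            simp at this
            exact absurd (isOfFinAddOrder_of_finite g) this
          · simp [addOrderOf_nsmul_eq_zero]
        rw [← div_eq_mul_inv, div_le_one (by exact_mod_cast hpos)]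
        exact_mod_cast this.le
    _ = _ := by simp

lemma cn_le_littleK (S : Multiset G) (h : IsZeroSumFree S) : crossNum S ≤ littleK G := by
  apply le_csSup
  · refine ⟨Nat.card G, ?_⟩
    rintro x ⟨S, hS, rfl⟩
    exact cn_le_card S hS
  · exact ⟨S, h, rfl⟩

lemma littleK_le (K : ℝ) (h : ∀ S : Multiset G, IsZeroSumFree S → crossNum S ≤ K) :
    littleK G ≤ K := by
  apply csSup_le
  · refine ⟨0, 0, ?_, cn_zero⟩
    intro T hT h0
    exact absurd (by simpa using hT) h0
  · rintro x ⟨S, hS, rfl⟩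
    exact h S hS

end little

section merge

variable {P : Type} {G : Type*} [AddCommGroup P] [AddCommGroup G] [Finite P] [Finite G]

lemma zsf_merge {H : Type*} [AddCommGroup H] [DecidableEq H] (U W T : Multiset H) (hT : T ≤ W) (h0 : T ≠ 0)
    (h : IsZeroSumFree (U + W)) : IsZeroSumFree ((U + {T.sum}) + (W - T)) := by
  intro A hA hA0 hs
  obtain ⟨B, A3, hB, hA3, rfl⟩ := exists_of_le_add _ _ _ hA
  obtain ⟨A1, A2, hA1, hA2, rfl⟩ := exists_of_le_add _ _ _ hB
  rcases Multiset.le_singleton.1 hA2 |>.symm with rfl | rfl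
  · refine h (A1 + (T + A3)) ?_ ?_ ?_
    · refine add_le_add hA1 ?_
      calc T + A3 ≤ T + (W - T) := by gcongr
        _ = W := add_tsub_cancel_of_le hT
    · intro h1
      simp at h1
      exact h0 h1.2.1
    · rw [← hs]; simp; abel
  · refine h (A1 + A3) ?_ ?_ ?_
    · exact add_le_add hA1 (hA3.trans tsub_le_self)
    · intro h1
      simp at h1
      simp [h1] at hA0
    · rw [← hs]; simp

lemma ord_prod (r : P × G) (h : (addOrderOf r.1).Coprime (addOrderOf r.2)) :
    ((addOrderOf r : ℝ))⁻¹ = ((addOrderOf r.1 : ℝ))⁻¹ * ((addOrderOf r.2 : ℝ))⁻¹ := by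
  rw [Prod.addOrderOf, h.lcm_eq_mul]
  push_cast
  rw [mul_inv]

lemma cn_fst (d : ℕ) (W : Multiset (P × G))
    (hc : ∀ a : P, ∀ g : G, (addOrderOf a).Coprime (addOrderOf g))
    (hW : ∀ w ∈ W, addOrderOf w.2 = d) :
    crossNum W = crossNum (W.map Prod.fst) * (d : ℝ)⁻¹ := by
  induction W using Multiset.induction_on with
  | empty => simp [cn_zero]
  | cons a W ih =>
    rw [Multiset.map_cons, cn_cons, cn_cons, ih (fun w hw => hW w (Multiset.mem_cons_of_mem hw)),
      ord_prod a (hc _ _), hW a (by simp)]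
    ring

lemma sum_fst (T : Multiset (P × G)) : T.sum.1 = (T.map Prod.fst).sum :=
  map_multiset_sum (AddMonoidHom.fst P G) T
lemma sum_snd (T : Multiset (P × G)) : T.sum.2 = (T.map Prod.snd).sum :=
  map_multiset_sum (AddMonoidHom.snd P G) T

lemma sum_nsmul_zero {H : Type*} [AddCommGroup H] (d : ℕ) (T : Multiset H)
    (h : ∀ a ∈ T, d • a = 0) : d • T.sum = 0 := by
  induction T using Multiset.induction_on with
  | empty => simp
  | cons a T ih =>
    rw [Multiset.sum_cons, smul_add, h a (by simp), ih (fun b hb => h b (by simp [hb]))]; simp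

lemma ord_sum_ge (d : ℕ) (hd : 0 < d) (T : Multiset (P × G)) (h1 : T.sum.1 = 0)
    (hW : ∀ w ∈ T, addOrderOf w.2 = d) : (d : ℝ)⁻¹ ≤ ((addOrderOf T.sum : ℝ))⁻¹ := by
  have : addOrderOf T.sum ∣ d := by
    rw [addOrderOf_dvd_iff_nsmul_eq_zero]
    ext
    · simp [h1]
    · show d • T.sum.2 = 0
      rw [sum_snd]
      apply sum_nsmul_zero
      intro a ha
      obtain ⟨w, hw, rfl⟩ := Multiset.mem_map.1 ha
      rw [← hW w hw]
      exact addOrderOf_nsmul_eq_zero _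
  have h2 : 0 < addOrderOf T.sum := addOrderOf_pos _
  gcongr
  exact Nat.le_of_dvd hd this

lemma lemA (hD : PropD P) (hE : PropE P)
    (hc : ∀ a : P, ∀ g : G, (addOrderOf a).Coprime (addOrderOf g)) (d : ℕ) (hd : 0 < d) :
    ∀ (k : ℕ) (W U : Multiset (P × G)), W.card = k → (∀ w ∈ W, addOrderOf w.2 = d) →
      IsZeroSumFree (U + W) → ∃ V : Multiset (P × G), (∀ v ∈ V, v.1 = 0) ∧
        IsZeroSumFree (U + V) ∧ crossNum (U + W) ≤ crossNum (U + V) + 2 / d := by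
  classical
  intro k
  induction k using Nat.strong_induction_on with
  | _ k ih =>
  intro W U hk hW hz
  have hd' : (0 : ℝ) < (d : ℝ)⁻¹ := by positivity
  have e := cn_fst d W hc hW
  set x := crossNum (W.map Prod.fst) with hx
  by_cases hx2 : x ≤ 2
  · refine ⟨0, by simp, zsf_mono (by simp) hz, ?_⟩
    rw [cn_add, e, add_zero, div_eq_mul_inv]
    gcongr
  push Not at hx2
  by_cases hx3 : x < 3
  · obtain ⟨T0, hT0, hne, hs⟩ := hD _ hx2.le
    obtain ⟨T, hT, rfl⟩ := exists_of_le_map _ _ _ hT0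
    have hTne : T ≠ 0 := by rintro rfl; simp at hne
    rw [← sum_fst] at hs
    refine ⟨{T.sum}, by simp [hs], zsf_mono ?_ (zsf_merge U W T hT hTne hz), ?_⟩
    · exact le_self_add
    · have := ord_sum_ge d hd T hs (fun w hw => hW w (Multiset.mem_of_le hT hw))
      rw [cn_add, cn_add, e]
      have e2 : crossNum {T.sum} = ((addOrderOf T.sum : ℝ))⁻¹ := by simp [crossNum]
      rw [e2, div_eq_mul_inv]
      nlinarith
  · push Not at hx3
    obtain ⟨T0, hT0, hne, hs, hle⟩ := hE _ hx3
    obtain ⟨T, hT, rfl⟩ := exists_of_le_map _ _ _ hT0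
    have hTne : T ≠ 0 := by rintro rfl; simp at hne
    rw [← sum_fst] at hs
    have hTW := fun w hw => hW w (Multiset.mem_of_le hT hw)
    have hcard : (W - T).card < k := by
      have h1 : 0 < T.card := Multiset.card_pos.2 hTne
      have h2 := Multiset.card_le_card hT
      rw [Multiset.card_sub hT]
      omega
    obtain ⟨V, hV, hVz, hVc⟩ := ih _ hcard (W - T) (U + {T.sum}) rfl
      (fun w hw => hW w (Multiset.mem_of_le tsub_le_self hw)) (zsf_merge U W T hT hTne hz)
    refine ⟨{T.sum} + V, ?_, by rwa [← add_assoc], ?_⟩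
    · intro v hv
      rcases Multiset.mem_add.1 hv with h | h
      · rw [Multiset.mem_singleton.1 h]; exact hs
      · exact hV v h
    · rw [← add_assoc]
      refine le_trans ?_ hVc
      have e3 : crossNum W = crossNum T + crossNum (W - T) := by
        rw [← cn_add, add_tsub_cancel_of_le hT]
      have e2 : crossNum {T.sum} = ((addOrderOf T.sum : ℝ))⁻¹ := by simp [crossNum]
      have := ord_sum_ge d hd T hs hTW
      have e4 := cn_fst d T hc hTW
      rw [cn_add, cn_add, cn_add, e3, e2]
      nlinarith

lemma cn_zeroG (R : Multiset (P × G)) (h : ∀ r ∈ R, r.1 = 0) :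
    crossNum R = crossNum (R.map Prod.snd) := by
  induction R using Multiset.induction_on with
  | empty => simp [cn_zero]
  | cons a R ih =>
    rw [Multiset.map_cons, cn_cons, cn_cons, ih (fun w hw => h w (Multiset.mem_cons_of_mem hw)),
      Prod.addOrderOf, h a (by simp)]
    simp

lemma cn_le_zeroG (R : Multiset (P × G)) (h : ∀ r ∈ R, r.1 = 0) (hz : IsZeroSumFree R) :
    crossNum R ≤ littleK G := by
  rw [cn_zeroG R h]
  apply cn_le_littleK
  intro T hT hne hs
  obtain ⟨T, hT', rfl⟩ := exists_of_le_map _ _ _ hT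
  refine hz T hT' (by rintro rfl; simp at hne) ?_
  ext
  · rw [sum_fst]
    apply Multiset.sum_eq_zero
    intro x hx
    obtain ⟨w, hw, rfl⟩ := Multiset.mem_map.1 hx
    exact h w (Multiset.mem_of_le hT' hw)
  · rw [sum_snd, hs]; rfl

lemma lemB (hD : PropD P) (hE : PropE P)
    (hc : ∀ a : P, ∀ g : G, (addOrderOf a).Coprime (addOrderOf g)) (D : Finset ℕ) :
    (∀ d ∈ D, 0 < d) → ∀ (R : Multiset (P × G)), IsZeroSumFree R →
      (∀ r ∈ R, r.1 ≠ 0 → addOrderOf r.2 ∈ D) →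
      crossNum R ≤ littleK G + ∑ d ∈ D, 2 / (d : ℝ) := by
  classical
  induction D using Finset.induction_on with
  | empty =>
    intro _ R hz h
    simp only [Finset.sum_empty, add_zero]
    refine cn_le_zeroG R (fun r hr => ?_) hz
    by_contra h0
    simpa using h r hr h0
  | insert d D hd ih =>
    intro hpos R hz h
    let W := R.filter (fun r => addOrderOf r.2 = d)
    let U := R.filter (fun r => ¬ addOrderOf r.2 = d)
    have hR : U + W = R := by
      rw [add_comm]; exact Multiset.filter_add_not _ _
    obtain ⟨V, hV, hVz, hVc⟩ := lemA hD hE hc d (hpos d (by simp)) _ W U rfl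
      (fun w hw => (Multiset.mem_filter.1 hw).2) (by rwa [hR])
    have := ih (fun d hd => hpos d (by simp [hd])) (U + V) hVz (by
      intro r hr h0
      rcases Multiset.mem_add.1 hr with hr | hr
      · have h1 := Multiset.mem_filter.1 hr
        have := h r h1.1 h0
        simp only [Finset.mem_insert] at this
        exact this.resolve_left h1.2
      · exact absurd (hV r hr) h0)
    rw [Finset.sum_insert hd]
    rw [hR] at hVc
    linarith

end merge

section mainC

variable {p : ℕ}

lemma dl_cons {P : Type} [AddCommGroup P] (a : P) (L : List P) (Q : P → ZMod p) :
    dl (a :: L) Q = dl L (fun x => Q (x + a) - Q x) := rfl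

lemma dl_const_zero {P : Type} [AddCommGroup P] (L : List P) (x : P) :
    dl L (fun _ => (0 : ZMod p)) x = 0 := by
  induction L with
  | nil => rfl
  | cons a L ih => rw [dl_cons]; simpa using ih

lemma dl_mem_zero {P : Type} [AddCommGroup P] (L : List P) : ∀ (Q : P → ZMod p) (x : P),
    (0 : P) ∈ L → dl L Q x = 0 := by
  induction L with
  | nil => intro Q x h; simp at h
  | cons a L ih =>
    intro Q x h
    rw [dl_cons]
    rcases List.mem_cons.1 h with h | h
    · subst h
      simpa using dl_const_zero L x
    · exact ih _ x h

lemma dl_comp {P H : Type} [AddCommGroup P] [AddCommGroup H] (f : P →+ H) (L : List P) :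
    ∀ (Q : H → ZMod p) (x : P), dl L (fun y => Q (f y)) x = dl (L.map f) Q (f x) := by
  induction L with
  | nil => intro Q x; rfl
  | cons a L ih =>
    intro Q x
    rw [List.map_cons, dl_cons, dl_cons, ← ih]
    simp

lemma DegLE.step {P : Type} [AddCommGroup P] {Q : P → ZMod p} {ε : ℝ} (h : DegLE Q ε) (a : P) :
    DegLE (fun x => Q (x + a) - Q x) (ε - ((addOrderOf a : ℝ))⁻¹) := by
  intro L hL x
  have := h (a :: L) (by rw [← Multiset.cons_coe, cn_cons]; linarith) x
  rwa [dl_cons] at this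

lemma ord_psmul (hp : p.Prime) {P : Type} [AddCommGroup P] (N : ℕ) (hN : ∀ a : P, p ^ N • a = 0)
    (a : P) (ha : a ≠ 0) :
    ((addOrderOf (p • a) : ℝ))⁻¹ = p * ((addOrderOf a : ℝ))⁻¹ := by
  have hd : addOrderOf a ∣ p ^ N := addOrderOf_dvd_iff_nsmul_eq_zero.2 (hN a)
  obtain ⟨k, hk, e⟩ := (Nat.dvd_prime_pow hp).1 hd
  have hk0 : k ≠ 0 := by
    rintro rfl
    simp at e
    exact ha e
  obtain ⟨j, rfl⟩ := Nat.exists_eq_succ_of_ne_zero hk0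
  have hpd : p ∣ addOrderOf a := by rw [e]; exact dvd_pow_self _ hk0
  have h2 := addOrderOf_nsmul_of_dvd hp.ne_zero hpd
  rw [h2, e, pow_succ, Nat.mul_div_cancel _ hp.pos]
  have : (p : ℝ) ≠ 0 := by exact_mod_cast hp.ne_zero
  push_cast
  field_simp

lemma ord_p_inv (hp : p.Prime) {P : Type} [AddCommGroup P] (a : P) (ha : a ≠ 0) (h : p • a = 0) :
    addOrderOf a = p := by
  have hd : addOrderOf a ∣ p := addOrderOf_dvd_iff_nsmul_eq_zero.2 h
  rcases (Nat.dvd_prime hp).1 hd with h | h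
  · simp at h; exact absurd h ha
  · exact h

lemma card_range_lt (hp : p.Prime) {P : Type} [AddCommGroup P] [Finite P] [Nontrivial P] (N : ℕ)
    (hN : ∀ a : P, p ^ N • a = 0) :
    Nat.card (nsmulAddMonoidHom (α := P) p).range < Nat.card P := by
  refine lt_of_le_of_ne (Nat.card_le_card_of_injective _ Subtype.val_injective) ?_
  intro h
  have h1 := AddSubgroup.eq_top_of_card_eq _ h
  have h2 : Function.Surjective (fun a : P => p • a) := by
    intro a
    have : a ∈ (nsmulAddMonoidHom (α := P) p).range := by rw [h1]; trivial
    exact this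
  have h3 : ∀ k : ℕ, Function.Surjective (fun a : P => p ^ k • a) := by
    intro k
    induction k with
    | zero => intro a; exact ⟨a, by simp⟩
    | succ k ih =>
      intro a
      obtain ⟨b, rfl⟩ := ih a
      obtain ⟨c, rfl⟩ := h2 b
      exact ⟨c, by simp [pow_succ, mul_smul]⟩
  obtain ⟨a, ha⟩ := exists_ne (0 : P)
  obtain ⟨b, hb⟩ := h3 N a
  simp only [hN] at hb
  exact ha hb.symm

variable {G : Type*} [AddCommGroup G] [Finite G]

lemma coprime_orders (hp : p.Prime) (hpG : ¬ p ∣ AddMonoid.exponent G) {P : Type} [AddCommGroup P]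
    (N : ℕ) (hN : ∀ a : P, p ^ N • a = 0) (a : P) (g : G) :
    (addOrderOf a).Coprime (addOrderOf g) := by
  have hd : addOrderOf a ∣ p ^ N := addOrderOf_dvd_iff_nsmul_eq_zero.2 (hN a)
  exact Nat.Coprime.coprime_dvd_left hd (Nat.Coprime.coprime_dvd_right
    (AddMonoid.addOrder_dvd_exponent g) (Nat.Coprime.pow_left _ ((Nat.Prime.coprime_iff_not_dvd hp).2 hpG)))

lemma sum_map_hom_fst {P H : Type} [AddCommGroup P] [AddCommGroup H] (f : P →+ H)
    (T : Multiset (P × G)) :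
    ((T.map (fun r => (f r.1, r.2))).map Prod.fst).sum = f (T.map Prod.fst).sum := by
  rw [map_multiset_sum, Multiset.map_map, Multiset.map_map]
  rfl

lemma sum_map_hom_snd {P H : Type} [AddCommGroup P] [AddCommGroup H] (f : P →+ H)
    (T : Multiset (P × G)) :
    ((T.map (fun r => (f r.1, r.2))).map Prod.snd) = T.map Prod.snd := by
  rw [Multiset.map_map]
  rfl

lemma lemC (hp : p.Prime) (hpG : ¬ p ∣ AddMonoid.exponent G) (N : ℕ)
    (hsum : ∑ d ∈ (AddMonoid.exponent G).divisors.erase 1, 2 / (d : ℝ) ≤ 1 / (p : ℝ)) :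
    ∀ (k : ℕ) (P : Type) [AddCommGroup P] [Finite P], Nat.card P = k →
      (∀ a : P, p ^ N • a = 0) → PropD P → PropE P →
      ∀ (n : ℕ) (Q : P → ZMod p) (ε : ℝ) (R : Multiset (P × G)), R.card = n → 0 ≤ ε → DegLE Q ε →
        Q 0 ≠ 0 → (∀ T, T ≤ R → T ≠ 0 → (T.map Prod.snd).sum = 0 → Q (T.map Prod.fst).sum = 0) →
        crossNum R ≤ littleK G + ε := by
  classical
  have hp0 : (0 : ℝ) < p := by exact_mod_cast hp.pos
  intro k
  induction k using Nat.strong_induction_on with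
  | _ k ihk =>
  intro P _ _ hk hN hD hE n
  induction n with
  | zero =>
    intro Q ε R hR hε _ _ _
    rw [Multiset.card_eq_zero] at hR
    subst hR
    have := cn_le_littleK (0 : Multiset G) (by
      intro T hT h0
      exact absurd (by simpa using hT) h0)
    rw [cn_zero] at this ⊢
    linarith
  | succ n ihn =>
  intro Q ε R hR hε hdeg hQ0 hT
  have hc := fun a g => coprime_orders (G := G) hp hpG N hN a g
  have hz : IsZeroSumFree R := by
    intro T hTR hT0 hs
    have h1 := hT T hTR hT0 (by rw [← sum_snd, hs]; rfl)
    rw [← sum_fst, hs] at h1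
    exact hQ0 h1
  by_cases hab : ∃ r ∈ R, r.1 ≠ 0 ∧ r.2 = 0
  · obtain ⟨r, hr, hr1, hr2⟩ := hab
    obtain ⟨R', rfl⟩ := Multiset.exists_cons_of_mem hr
    have hQa : Q r.1 = 0 := by
      have := hT {r} (by simp) (by simp) (by simpa using hr2)
      simpa using this
    have hord : addOrderOf r = addOrderOf r.1 := by
      rw [Prod.addOrderOf, hr2]; simp
    have hεa : ((addOrderOf r.1 : ℝ))⁻¹ ≤ ε := by
      by_contra hcon
      push Not at hcon
      have := hdeg [r.1] (by simpa [crossNum] using hcon) 0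
      have h2 : Q (0 + r.1) - Q 0 = 0 := this
      simp [hQa] at h2
      exact hQ0 h2
    have := ihn (fun x => Q (x + r.1) - Q x) (ε - ((addOrderOf r.1 : ℝ))⁻¹) R'
      (by simpa using hR) (by linarith) (hdeg.step r.1) (by simpa [hQa] using hQ0) (by
        intro T hTR hT0 hs
        have h1 := hT T (hTR.trans (Multiset.le_cons_self _ _)) hT0 hs
        have h2 := hT (r ::ₘ T) ((Multiset.cons_le_cons_iff _).2 hTR) (by simp) (by simp [hr2, hs])
        rw [Multiset.map_cons, Multiset.sum_cons, add_comm] at h2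
        simp only [h1, h2, sub_zero])
    rw [cn_cons, hord]
    linarith
  by_cases hεp : 1 / (p : ℝ) ≤ ε
  · have := lemB hD hE hc ((AddMonoid.exponent G).divisors.erase 1) (by
      intro d hd
      exact Nat.pos_of_mem_divisors (Finset.mem_of_mem_erase hd)) R hz (by
      intro r hr h0
      rw [Finset.mem_erase, Nat.mem_divisors]
      refine ⟨?_, AddMonoid.addOrder_dvd_exponent _, AddMonoid.exponent_ne_zero_of_finite⟩
      intro h1
      rw [AddMonoid.addOrderOf_eq_one_iff] at h1
      exact hab ⟨r, hr, h0, h1⟩)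
    linarith
  push Not at hεp
  rcases subsingleton_or_nontrivial P with hs | hnt
  · have := cn_le_zeroG R (fun r _ => Subsingleton.elim _ _) hz
    linarith
  let H := (nsmulAddMonoidHom (α := P) p).range
  let f : P →+ H := (nsmulAddMonoidHom (α := P) p).rangeRestrict
  have hf : Function.Surjective f := AddMonoidHom.rangeRestrict_surjective _
  have hfv : ∀ a, ((f a : H) : P) = p • a := fun a => rfl
  have hinv : ∀ x y : P, f x = f y → Q x = Q y := by
    intro x y hxy
    by_cases hb : x - y = 0
    · rw [sub_eq_zero.1 hb]
    have h1 : p • (x - y) = 0 := by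
      rw [← hfv, map_sub, hxy, sub_self]; rfl
    have h2 := ord_p_inv hp _ hb h1
    have := hdeg [x - y] (by simpa [crossNum, h2] using hεp) y
    have h3 : Q (y + (x - y)) - Q y = 0 := this
    rw [add_sub_cancel, sub_eq_zero] at h3
    exact h3
  let g := Function.surjInv hf
  have hg : ∀ x, f (g x) = x := Function.surjInv_eq hf
  let Q' : H → ZMod p := fun x => Q (g x)
  have hQ' : ∀ x, Q' (f x) = Q x := fun x => hinv _ _ (hg _)
  have hof : ∀ a : P, a ≠ 0 → ((addOrderOf (f a) : ℝ))⁻¹ = p * ((addOrderOf a : ℝ))⁻¹ := by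
    intro a ha
    rw [← ord_psmul hp N hN a ha, ← hfv, AddSubgroup.addOrderOf_coe]
  have hdeg' : DegLE Q' (p * ε) := by
    intro L hL x
    by_cases h0 : (0 : H) ∈ L
    · exact dl_mem_zero L _ _ h0
    have hL' : L = (L.map g).map f := by
      rw [List.map_map]
      conv_lhs => rw [← List.map_id L]
      apply List.map_congr_left
      intro a _
      exact (hg a).symm
    have hkL : crossNum (L : Multiset H) = p * crossNum ((L.map g : List P) : Multiset P) := by
      clear hL hL'
      induction L with
      | nil => simp [crossNum]
      | cons a L ih =>
        rw [List.map_cons, ← Multiset.cons_coe, ← Multiset.cons_coe, cn_cons, cn_cons,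
          ih (fun h => h0 (List.mem_cons_of_mem _ h)), mul_add, ← hof, hg]
        intro hga
        apply h0
        have := hg a
        rw [hga, map_zero] at this
        rw [← this]; simp
    have h1 := hdeg (L.map g) (by
      rw [hkL] at hL
      exact lt_of_mul_lt_mul_left hL hp0.le) (g x)
    have h2 : (fun y => Q' (f y)) = Q := funext hQ'
    rw [← h2, dl_comp, ← hL', hg] at h1
    exact h1
  have hmain := ihk (Nat.card H) (by rw [← hk]; exact card_range_lt hp N hN) H rfl
    (fun a => by ext; simpa using hN (a : P)) (hD.sub H) (hE.sub H) _ Q' (p * ε)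
    (R.map (fun r => (f r.1, r.2))) rfl (by positivity) hdeg'
    (by
      have := hQ' 0
      rw [map_zero] at this
      rwa [this])
    (by
      intro T hTR hT0 hs
      obtain ⟨T, hTR', rfl⟩ := exists_of_le_map _ _ _ hTR
      rw [sum_map_hom_fst, hQ']
      rw [sum_map_hom_snd] at hs
      exact hT T hTR' (by rintro rfl; simp at hT0) hs)
  let R0 := R.filter (fun r => r.1 = 0)
  let R1 := R.filter (fun r => ¬ r.1 = 0)
  have hR01 : R0 + R1 = R := Multiset.filter_add_not _ _
  have hK0 : crossNum R0 ≤ littleK G :=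
    cn_le_zeroG R0 (fun r hr => (Multiset.mem_filter.1 hr).2) (zsf_mono (Multiset.filter_le _ _) hz)
  have hcH := fun a g => coprime_orders (G := G) (P := H) hp hpG N
    (fun a => by ext; simpa using hN (a : P)) a g
  have hm0 : crossNum (R0.map (fun r => (f r.1, r.2))) = crossNum R0 := by
    unfold crossNum
    rw [Multiset.map_map]
    congr 1
    apply Multiset.map_congr rfl
    intro r hr
    have h0 := (Multiset.mem_filter.1 hr).2
    simp only [Function.comp, Prod.addOrderOf, h0, map_zero, addOrderOf_zero]
  have hm1 : crossNum (R1.map (fun r => (f r.1, r.2))) = p * crossNum R1 := by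
    unfold crossNum
    rw [Multiset.map_map, ← Multiset.sum_map_mul_left]
    congr 1
    apply Multiset.map_congr rfl
    intro r hr
    have h0 := (Multiset.mem_filter.1 hr).2
    simp only [Function.comp]
    rw [ord_prod _ (hcH _ _), ord_prod r (hc _ _), ← mul_assoc, ← hof r.1 h0]
  rw [← hR01, Multiset.map_add, cn_add, hm0, hm1] at hmain
  rw [← hR01, cn_add]
  have hp1 : (1 : ℝ) ≤ p := by exact_mod_cast hp.one_le
  have : p * (crossNum R0 + crossNum R1) ≤ p * (littleK G + ε) := by nlinarith
  exact le_of_mul_le_mul_left this hp0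

end mainC

section finish

lemma cn_map_eq {A B : Type*} [AddCommGroup A] [AddCommGroup B] (f : A → B)
    (hf : ∀ a, addOrderOf (f a) = addOrderOf a) (S : Multiset A) :
    crossNum (S.map f) = crossNum S := by
  unfold crossNum
  rw [Multiset.map_map]
  simp [Function.comp_def, hf]

lemma littleK_add_le (A B : Type*) [AddCommGroup A] [AddCommGroup B] [Finite A] [Finite B] :
    littleK A + littleK B ≤ littleK (A × B) := by
  have key : ∀ (S : Multiset A) (T : Multiset B), IsZeroSumFree S → IsZeroSumFree T →
      crossNum S + crossNum T ≤ littleK (A × B) := by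
    intro S T hS hT
    have e1 : crossNum (S.map (fun a => (a, (0 : B)))) = crossNum S :=
      cn_map_eq _ (fun a => by simp [Prod.addOrderOf]) S
    have e2 : crossNum (T.map (fun b => ((0 : A), b))) = crossNum T :=
      cn_map_eq _ (fun a => by simp [Prod.addOrderOf]) T
    rw [← e1, ← e2, ← cn_add]
    apply cn_le_littleK
    intro X hX hX0 hs
    obtain ⟨X1, X2, h1, h2, rfl⟩ := exists_of_le_add _ _ _ hX
    obtain ⟨Y, hY, rfl⟩ := exists_of_le_map _ _ _ h1
    obtain ⟨Z, hZ, rfl⟩ := exists_of_le_map _ _ _ h2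
    have s1 : (Y.map (fun a => (a, (0 : B)))).sum = (Y.sum, 0) :=
      (map_multiset_sum (AddMonoidHom.inl A B) Y).symm
    have s2 : (Z.map (fun b => ((0 : A), b))).sum = (0, Z.sum) :=
      (map_multiset_sum (AddMonoidHom.inr A B) Z).symm
    rw [Multiset.sum_add, s1, s2, Prod.mk_add_mk, add_zero, zero_add, Prod.mk_eq_zero] at hs
    by_cases hY0 : Y = 0
    · by_cases hZ0 : Z = 0
      · subst hY0 hZ0; simp at hX0
      · exact hT Z hZ hZ0 hs.2
    · exact hS Y hY hY0 hs.1
  have h1 : littleK A ≤ littleK (A × B) - littleK B := by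
    apply littleK_le
    intro S hS
    have : littleK B ≤ littleK (A × B) - crossNum S := by
      apply littleK_le
      intro T hT
      linarith [key S T hS hT]
    linarith
  linarith

lemma le_littleK_zmod (q : ℕ) (hq : 0 < q) : 1 - (q : ℝ)⁻¹ ≤ littleK (ZMod q) := by
  have : NeZero q := ⟨hq.ne'⟩
  have h : crossNum (Multiset.replicate (q - 1) (1 : ZMod q)) = 1 - (q : ℝ)⁻¹ := by
    have : (q : ℝ) ≠ 0 := by exact_mod_cast hq.ne'
    simp only [crossNum, Multiset.map_replicate, Multiset.sum_replicate, ZMod.addOrderOf_one,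
      nsmul_eq_mul]
    rw [Nat.cast_sub (by omega)]
    field_simp
    simp
  rw [← h]
  apply cn_le_littleK
  intro T hT h0 hs
  obtain ⟨j, hj, rfl⟩ := Multiset.le_replicate_iff.1 hT
  rw [Multiset.sum_replicate, nsmul_eq_mul, mul_one, ZMod.natCast_eq_zero_iff] at hs
  have : j ≠ 0 := by rintro rfl; simp at h0
  have := Nat.le_of_dvd (by omega) hs
  omega

lemma upper_pair {p : ℕ} (hp : p.Prime) {G : Type*} [AddCommGroup G] [Finite G]
    (h2 : TwoSmall p (AddMonoid.exponent G)) (m n : ℕ)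
    (R : Multiset ((ZMod (p ^ m) × ZMod (p ^ n)) × G)) (hR : IsZeroSumFree R) :
    crossNum R ≤ littleK G + ((1 - ((p ^ m : ℕ) : ℝ)⁻¹) + (1 - ((p ^ n : ℕ) : ℝ)⁻¹)) := by
  classical
  have : NeZero (p ^ m) := ⟨pow_ne_zero _ hp.ne_zero⟩
  have : NeZero (p ^ n) := ⟨pow_ne_zero _ hp.ne_zero⟩
  have : Fact p.Prime := ⟨hp⟩
  have hN : ∀ a : ZMod (p ^ m) × ZMod (p ^ n), p ^ (m + n) • a = 0 := by
    rintro ⟨a, b⟩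
    have h1 : ((p ^ (m + n) : ℕ) : ZMod (p ^ m)) = 0 :=
      (ZMod.natCast_eq_zero_iff _ _).2 (pow_dvd_pow _ (by omega))
    have h2 : ((p ^ (m + n) : ℕ) : ZMod (p ^ n)) = 0 :=
      (ZMod.natCast_eq_zero_iff _ _).2 (pow_dvd_pow _ (by omega))
    ext
    · show p ^ (m + n) • a = 0
      rw [nsmul_eq_mul, h1, zero_mul]
    · show p ^ (m + n) • b = 0
      rw [nsmul_eq_mul, h2, zero_mul]
  have hP : ∀ q, 0 < q → NilT p (ZMod (p ^ m) × ZMod (p ^ n)) q (2 * (1 - (q : ℝ)⁻¹)) := by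
    intro q hq
    rw [two_mul]
    exact nilT_prod (nilT_zmod hp m q hq) (nilT_zmod hp n q hq)
  have inv_le : ∀ k : ℕ, 0 ≤ 1 - ((p ^ k : ℕ) : ℝ)⁻¹ := by
    intro k
    have h1 : (1 : ℝ) ≤ ((p ^ k : ℕ) : ℝ) := by exact_mod_cast Nat.one_le_pow _ _ hp.pos
    have := inv_le_one_of_one_le₀ h1
    linarith
  have hsum : ∑ d ∈ (AddMonoid.exponent G).divisors.erase 1, 2 / (d : ℝ) ≤ 1 / (p : ℝ) := by
    have hq := h2.2
    have hq' : (((∑ d ∈ (AddMonoid.exponent G).divisors, (1 : ℚ) / d : ℚ)) : ℝ)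
        < (((2 * p + 2 : ℚ) / (2 * p + 1) : ℚ) : ℝ) := by exact_mod_cast hq
    push_cast at hq'
    have hmem : 1 ∈ (AddMonoid.exponent G).divisors := by
      rw [Nat.mem_divisors]
      exact ⟨one_dvd _, AddMonoid.exponent_ne_zero_of_finite⟩
    rw [← Finset.add_sum_erase _ _ hmem] at hq'
    have e : ∑ d ∈ (AddMonoid.exponent G).divisors.erase 1, 2 / (d : ℝ)
        = 2 * ∑ d ∈ (AddMonoid.exponent G).divisors.erase 1, 1 / (d : ℝ) := by
      rw [Finset.mul_sum]
      apply Finset.sum_congr rfl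
      intro d _
      ring
    rw [e]
    have hp0 : (0 : ℝ) < p := by exact_mod_cast hp.pos
    have e2 : (2 * (p : ℝ) + 2) / (2 * p + 1) = 1 + 1 / (2 * p + 1) := by field_simp; ring
    rw [e2] at hq'
    have e3 : 2 * (1 / (2 * (p : ℝ) + 1)) ≤ 1 / p := by
      rw [← mul_div_assoc, mul_one, div_le_div_iff₀ (by positivity) hp0]
      linarith
    norm_num at hq' e3 ⊢
    linarith
  refine lemC hp h2.1 (m + n) hsum _ _ rfl hN (propD_of hp (m + n) hN hP) (propE_of hp (m + n) hN hP)
    _ (fun x => if x = 0 then 1 else 0) _ R rfl (add_nonneg (inv_le m) (inv_le n)) ?_ ?_ ?_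
  · intro L hL x
    exact nilT_dl hp (nilT_prod (nilT_zmod_zero hp m) (nilT_zmod_zero hp n)) _ L (by simp) hL x
  · simp
  · intro T hT h0 hs
    rw [if_neg]
    intro h1
    apply hR T hT h0
    ext1
    · rw [sum_fst, h1]; rfl
    · rw [sum_snd, hs]; rfl

end finish


/-- If `p` is a prime that is 2-small with respect to `exp(G)`, then for all positive
integers `m, n`: `k(C_{p^m} ⊕ C_{p^n} ⊕ G) = k(C_{p^m}) + k(C_{p^n}) + k(G)`. -/
theorem littleK_zmod_pow_prod_of_twoSmall
    (p : ℕ) (hp : p.Prime) (G : Type*) [AddCommGroup G] [Finite G]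
    (h2 : TwoSmall p (AddMonoid.exponent G)) (m n : ℕ) (hm : 0 < m) (hn : 0 < n) :
    littleK (ZMod (p ^ m) × ZMod (p ^ n) × G)
      = littleK (ZMod (p ^ m)) + littleK (ZMod (p ^ n)) + littleK G := by
  have : NeZero (p ^ m) := ⟨pow_ne_zero _ hp.ne_zero⟩
  have : NeZero (p ^ n) := ⟨pow_ne_zero _ hp.ne_zero⟩
  apply le_antisymm
  · apply littleK_le
    intro S hS
    let e : ZMod (p ^ m) × ZMod (p ^ n) × G ≃+ (ZMod (p ^ m) × ZMod (p ^ n)) × G :=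
      AddEquiv.prodAssoc.symm
    have h1 : crossNum (S.map e) = crossNum S :=
      cn_map_eq e (fun a => addOrderOf_injective e.toAddMonoidHom e.injective a) S
    have h3 := upper_pair hp h2 m n (S.map e) (by
      intro T hT h0 hs
      obtain ⟨T, hT', rfl⟩ := exists_of_le_map _ _ _ hT
      refine hS T hT' (by rintro rfl; simp at h0) ?_
      have h4 : e T.sum = (T.map e).sum := map_multiset_sum e T
      rw [hs] at h4
      exact e.injective (h4.trans (map_zero e).symm))
    have h4 := le_littleK_zmod (p ^ m) (pow_pos hp.pos _)
    have h5 := le_littleK_zmod (p ^ n) (pow_pos hp.pos _)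
    linarith
  · have h1 := littleK_add_le (ZMod (p ^ m)) (ZMod (p ^ n) × G)
    have h3 := littleK_add_le (ZMod (p ^ n)) G
    linarith
end

section
/- Let p be a prime and G a finite abelian group such that p is 2-small with respect to exp(G), and suppose k(G) = k*(G). Then for all positive integers m and n, k(C_{p^m} ⊕ C_{p^n} ⊕ G) = k*(C_{p^m} ⊕ C_{p^n} ⊕ G). -/
section Helpers
open Finset

section RingPart
variable {R : Type*} [CommRing R] {ι : Type*} [Fintype ι]

/-- Weighted power ideals. -/
def wIdeal (y : ι → R) (q : ι → ℕ) (w : ℕ) : Ideal R :=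
  Ideal.span {z | ∃ c : ι → ℕ, w ≤ ∑ i, c i * q i ∧ z = ∏ i, y i ^ c i}

lemma wIdeal_mul (y : ι → R) (q : ι → ℕ) {w w' : ℕ} {a b : R}
    (ha : a ∈ wIdeal y q w) (hb : b ∈ wIdeal y q w') : a * b ∈ wIdeal y q (w + w') := by
  have h : wIdeal y q w * wIdeal y q w' ≤ wIdeal y q (w + w') := by
    unfold wIdeal
    rw [Ideal.span_mul_span', Ideal.span_le]
    rintro z ⟨u, ⟨c, hc, rfl⟩, v, ⟨c', hc', rfl⟩, rfl⟩
    apply Ideal.subset_span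
    refine ⟨fun i => c i + c' i, ?_, ?_⟩
    · simp only [add_mul, Finset.sum_add_distrib]; omega
    · simp only [pow_add, Finset.prod_mul_distrib]
  exact h (Ideal.mul_mem_mul ha hb)

lemma wIdeal_zero_eq (y : ι → R) (q k : ι → ℕ) (hy : ∀ i, y i ^ k i = 0) {w : ℕ}
    (hw : ∑ i, (k i - 1) * q i < w) {a : R} (ha : a ∈ wIdeal y q w) : a = 0 := by
  have h : wIdeal y q w ≤ ⊥ := by
    unfold wIdeal
    rw [Ideal.span_le]
    rintro z ⟨c, hc, rfl⟩
    simp only [SetLike.mem_coe, Ideal.mem_bot]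
    have : ∃ i, k i ≤ c i := by
      by_contra! hcon
      have : ∑ i, c i * q i ≤ ∑ i, (k i - 1) * q i := by
        apply Finset.sum_le_sum
        intro i _
        have := hcon i
        exact Nat.mul_le_mul_right _ (by omega)
      omega
    obtain ⟨i, hi⟩ := this
    exact Finset.prod_eq_zero (Finset.mem_univ i) (pow_eq_zero_of_le hi (hy i))
  simpa using h ha

lemma wIdeal_prod (y : ι → R) (q : ι → ℕ) {I : Type*} (s : Finset I) (f : I → R) (w : I → ℕ)
    (h : ∀ i ∈ s, f i ∈ wIdeal y q (w i)) : ∏ i ∈ s, f i ∈ wIdeal y q (∑ i ∈ s, w i) := by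
  classical
  induction s using Finset.induction_on with
  | empty =>
    simp only [prod_empty, sum_empty]
    apply Ideal.subset_span
    exact ⟨fun _ => 0, by simp, by simp⟩
  | insert a s ha ih =>
    rw [prod_insert ha, sum_insert ha]
    exact wIdeal_mul y q (h a (mem_insert_self _ _))
      (ih fun i hi => h i (mem_insert_of_mem hi))

lemma wIdeal_pow_mem (y : ι → R) (q : ι → ℕ) (i : ι) (n w : ℕ) (h : w ≤ n * q i) :
    y i ^ n ∈ wIdeal y q w := by
  classical
  apply Ideal.subset_span
  refine ⟨fun j => if j = i then n else 0, ?_, ?_⟩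
  · simpa using h
  · simp [pow_ite]

end RingPart

/-- Zero-sum free indexed families. -/
def ZSF {I H : Type*} [AddCommGroup H] (s : Finset I) (F : I → H) : Prop :=
  ∀ t ⊆ s, t.Nonempty → ∑ i ∈ t, F i ≠ 0

lemma one_sub_prod_mem {R : Type*} [CommRing R] {ι : Type*} (J : Ideal R) (s : Finset ι)
    (z : ι → R) (h : ∀ k ∈ s, 1 - z k ∈ J) : 1 - ∏ k ∈ s, z k ∈ J := by
  rw [← Ideal.Quotient.mk_eq_mk_iff_sub_mem, map_one, map_prod]
  symm
  apply Finset.prod_eq_one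
  intro k hk
  have := h k hk
  rw [← Ideal.Quotient.mk_eq_mk_iff_sub_mem, map_one] at this
  exact this.symm

lemma zsf_weight {p : ℕ} (hp : p.Prime) {H ι I : Type*} [AddCommGroup H] [Fintype ι]
    (e : ι → H) (m : ι → ℕ) (N : ℕ) (hN : ∀ k, m k ≤ N) (he : ∀ k, p ^ m k • e k = 0)
    (s : Finset I) (F : I → H) (b : I → ℕ)
    (hF : ∀ i ∈ s, ∃ c : ι → ℕ, F i = ∑ k, c k • e k ∧ ∀ k, p ^ m k ∣ p ^ b i * c k)
    (hz : ZSF s F) :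
    ∑ i ∈ s, p ^ (N - b i) ≤ ∑ k, (p ^ m k - 1) * p ^ (N - m k) := by
  classical
  by_contra! hcon
  have : Fact p.Prime := ⟨hp⟩
  have : CharP (AddMonoidAlgebra (ZMod p) H) p :=
    charP_of_injective_algebraMap (algebraMap (ZMod p) (AddMonoidAlgebra (ZMod p) H)).injective p
  let X : H → AddMonoidAlgebra (ZMod p) H := fun g => AddMonoidAlgebra.single g 1
  have X0 : X 0 = 1 := rfl
  have Xadd : ∀ g h, X (g + h) = X g * X h := by
    intro g h; simp [X, AddMonoidAlgebra.single_mul_single]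
  have Xn : ∀ (n : ℕ) g, X (n • g) = X g ^ n := by
    intro n g; simp [X, AddMonoidAlgebra.single_pow]
  have Xsum : ∀ {J : Type _} (t : Finset J) (f : J → H), X (∑ i ∈ t, f i) = ∏ i ∈ t, X (f i) := by
    intro J t f
    induction t using Finset.induction_on with
    | empty => simp [X0]
    | insert a t ha ih => rw [sum_insert ha, prod_insert ha, Xadd, ih]
  have Xsum' : ∀ (t : Finset I) (f : I → H), X (∑ i ∈ t, f i) = ∏ i ∈ t, X (f i) := by
    intro t f
    induction t using Finset.induction_on with
    | empty => simp [X0]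
    | insert a t ha ih => rw [sum_insert ha, prod_insert ha, Xadd, ih]
  let y : ι → AddMonoidAlgebra (ZMod p) H := fun k => 1 - X (e k)
  have ypow : ∀ k n, y k ^ p ^ n = 1 - X (p ^ n • e k) := by
    intro k n
    simp only [y]
    rw [sub_pow_char_pow, one_pow, Xn]
  have hprod : ∏ i ∈ s, (1 - X (F i)) ∈ wIdeal y (fun k => p ^ (N - m k))
      (∑ i ∈ s, p ^ (N - b i)) := by
    apply wIdeal_prod
    intro i hi
    obtain ⟨c, hc, hd⟩ := hF i hi
    rw [hc, Xsum]
    apply one_sub_prod_mem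
    intro k _
    have hdv : p ^ (m k - b i) ∣ c k := by
      rcases le_total (m k) (b i) with h | h
      · simp [Nat.sub_eq_zero_of_le h]
      · have := hd k
        rw [← Nat.add_sub_of_le h, pow_add] at this
        simpa using Nat.dvd_of_mul_dvd_mul_left (pow_pos hp.pos _) this
    obtain ⟨c', hc'⟩ := hdv
    have h1 : y k ^ p ^ (m k - b i) ∈ wIdeal y (fun k => p ^ (N - m k)) (p ^ (N - b i)) := by
      apply wIdeal_pow_mem
      rw [← pow_add]
      apply Nat.pow_le_pow_right hp.pos
      have := hN k
      omega
    have h2 : y k ^ p ^ (m k - b i) ∣ 1 - X (c k • e k) := by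
      rw [ypow, hc', Xn, Xn, pow_mul]
      exact one_sub_dvd_one_sub_pow _ _
    exact Ideal.mem_of_dvd _ h2 h1
  have hzero := wIdeal_zero_eq y (fun k => p ^ (N - m k)) (fun k => p ^ m k)
    (by intro k; rw [ypow, he, X0, sub_self]) hcon hprod
  have hexp : ∏ i ∈ s, (1 - X (F i)) = ∑ t ∈ s.powerset, (-1) ^ #t * X (∑ i ∈ t, F i) := by
    simp only [sub_eq_add_neg]
    rw [Finset.prod_one_add]
    apply Finset.sum_congr rfl
    intro t _
    rw [Finset.prod_neg, Xsum']
  let φ : AddMonoidAlgebra (ZMod p) H →+ ZMod p :=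
    { toFun := fun x => x.coeff 0, map_zero' := by simp, map_add' := by simp }
  have φX : ∀ g, φ (X g) = if g = 0 then 1 else 0 := by
    intro g
    change (AddMonoidAlgebra.single g (1 : ZMod p)).coeff 0 = _
    simp [Finsupp.single_apply]
  have hcoef : φ (∑ t ∈ s.powerset, (-1) ^ #t * X (∑ i ∈ t, F i)) = 1 := by
    rw [map_sum, Finset.sum_eq_single ∅]
    · simp [φX]
    · intro t ht hne
      have h0 := hz t (mem_powerset.1 ht) (nonempty_iff_ne_empty.2 hne)
      rcases neg_one_pow_eq_or (AddMonoidAlgebra (ZMod p) H) #t with h | h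
      · rw [h, one_mul, φX, if_neg h0]
      · rw [h, neg_one_mul, map_neg, φX, if_neg h0, neg_zero]
    · simp
  rw [← hexp, hzero] at hcoef
  simp at hcoef

/-- A weak form of a basis for a finite abelian `p`-group. -/
structure PB (p : ℕ) {H ι : Type*} [AddCommGroup H] [Fintype ι] (e : ι → H) (m : ι → ℕ) :
    Prop where
  tors : ∀ k, p ^ m k • e k = 0
  span : ∀ g, ∃ c : ι → ℕ, g = ∑ k, c k • e k ∧ ∀ k, p ^ m k ∣ addOrderOf g * c k

lemma PB.zmod (p m : ℕ) (hp : p.Prime) :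
    PB p (fun _ : Unit => (1 : ZMod (p ^ m))) (fun _ => m) := by
  have : NeZero (p ^ m) := ⟨(pow_pos hp.pos m).ne'⟩
  constructor
  · intro k
    simpa using ZMod.natCast_self (p ^ m)
  · intro g
    refine ⟨fun _ => g.val, by simp, fun _ => ?_⟩
    have h := addOrderOf_nsmul_eq_zero g
    rw [← ZMod.natCast_eq_zero_iff]
    simpa using h

lemma PB.prod {p : ℕ} {H ι H' ι' : Type*} [AddCommGroup H] [Fintype ι] [AddCommGroup H']
    [Fintype ι'] {e : ι → H} {m : ι → ℕ} {e' : ι' → H'} {m' : ι' → ℕ} (h : PB p e m)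
    (h' : PB p e' m') :
    PB p (Sum.elim (fun k => (e k, (0 : H'))) (fun k => ((0 : H), e' k))) (Sum.elim m m') := by
  constructor
  · rintro (k | k)
    · simp [h.tors]
    · simp [h'.tors]
  · rintro ⟨g, g'⟩
    obtain ⟨c, hc, hd⟩ := h.span g
    obtain ⟨c', hc', hd'⟩ := h'.span g'
    refine ⟨Sum.elim c c', ?_, ?_⟩
    · rw [Fintype.sum_sum_type]
      ext <;> simp [Prod.fst_sum, Prod.snd_sum, ← hc, ← hc']
    · rintro (k | k)
      · exact (hd k).trans (Nat.mul_dvd_mul_right (by rw [Prod.addOrderOf]; exact Nat.dvd_lcm_left _ _) _)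
      · exact (hd' k).trans (Nat.mul_dvd_mul_right (by rw [Prod.addOrderOf]; exact Nat.dvd_lcm_right _ _) _)

lemma PB.order {p : ℕ} {H ι : Type*} [AddCommGroup H] [Fintype ι]
    {e : ι → H} {m : ι → ℕ} (h : PB p e m) (g : H) : addOrderOf g ∣ p ^ (∑ k, m k) := by
  rw [addOrderOf_dvd_iff_nsmul_eq_zero]
  obtain ⟨c, hc, -⟩ := h.span g
  rw [hc, Finset.smul_sum]
  apply Finset.sum_eq_zero
  intro k _
  rw [smul_comm]
  have : p ^ m k ∣ p ^ (∑ k, m k) :=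
    pow_dvd_pow _ (Finset.single_le_sum (fun _ _ => Nat.zero_le _) (Finset.mem_univ k))
  obtain ⟨u, hu⟩ := this
  rw [hu, mul_comm, mul_smul, h.tors, smul_zero, smul_zero]

lemma zsf_pgroup {p : ℕ} (hp : p.Prime) {H ι I : Type*} [AddCommGroup H] [Fintype ι]
    {e : ι → H} {m : ι → ℕ} (h : PB p e m) (s : Finset I) (F : I → H) (a : ℕ)
    (ha : ∀ i ∈ s, addOrderOf (F i) ∣ p ^ a) (hz : ZSF s F) :
    ∑ i ∈ s, ((addOrderOf (F i) : ℝ))⁻¹ ≤ ∑ k, (1 - ((p : ℝ) ^ min (m k) a)⁻¹) := by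
  classical
  have hord : ∀ i, ∃ b, i ∈ s → b ≤ a ∧ addOrderOf (F i) = p ^ b := by
    intro i
    by_cases hi : i ∈ s
    · obtain ⟨b, hb, hb'⟩ := (Nat.dvd_prime_pow hp).1 (ha i hi)
      exact ⟨b, fun _ => ⟨hb, hb'⟩⟩
    · exact ⟨0, fun h => absurd h hi⟩
  choose b hb using hord
  have key := zsf_weight hp (fun k => p ^ (m k - a) • e k) (fun k => min (m k) a) a
    (fun k => min_le_right _ _) (by
      intro k
      rw [← mul_smul, ← pow_add]
      have : min (m k) a + (m k - a) = m k := by omega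
      rw [this, h.tors]) s F b (by
      intro i hi
      obtain ⟨c, hc, hd⟩ := h.span (F i)
      have hdv : ∀ k, p ^ (m k - a) ∣ c k := by
        intro k
        rcases le_total (m k) a with h' | h'
        · simp [Nat.sub_eq_zero_of_le h']
        · have h2 := (hd k).trans (Nat.mul_dvd_mul_right (ha i hi) _)
          rw [← Nat.add_sub_of_le h', pow_add] at h2
          simpa using Nat.dvd_of_mul_dvd_mul_left (pow_pos hp.pos _) h2
      choose c' hc' using hdv
      refine ⟨c', ?_, ?_⟩
      · conv_lhs => rw [hc]
        apply Finset.sum_congr rfl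
        intro k _
        conv_lhs => rw [hc' k]
        rw [mul_comm, mul_smul]
      · intro k
        have h2 := hd k
        rw [hc' k, (hb i hi).2] at h2
        have h3 : m k = (m k - a) + min (m k) a := by omega
        have h4 : p ^ m k = p ^ (m k - a) * p ^ min (m k) a := by rw [← pow_add, ← h3]
        rw [h4] at h2
        have h5 : p ^ b i * (p ^ (m k - a) * c' k) = p ^ (m k - a) * (p ^ b i * c' k) := by ring
        rw [h5] at h2
        exact Nat.dvd_of_mul_dvd_mul_left (pow_pos hp.pos _) h2) hz
  have hp0 : (0 : ℝ) < p := by exact_mod_cast hp.pos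
  have key' : (∑ i ∈ s, (p : ℝ) ^ (a - b i)) ≤
      ∑ k, ((p : ℝ) ^ min (m k) a - 1) * (p : ℝ) ^ (a - min (m k) a) := by
    have : ((∑ i ∈ s, p ^ (a - b i) : ℕ) : ℝ) ≤
      ((∑ k, (p ^ min (m k) a - 1) * p ^ (a - min (m k) a) : ℕ) : ℝ) := by exact_mod_cast key
    push_cast at this
    refine this.trans (le_of_eq ?_)
    apply Finset.sum_congr rfl
    intro k _
    rw [Nat.cast_sub (Nat.one_le_pow _ _ hp.pos)]
    push_cast
    rfl
  have hpa : (0 : ℝ) < (p : ℝ) ^ a := by positivity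
  have e1 : ∑ i ∈ s, ((addOrderOf (F i) : ℝ))⁻¹ = (∑ i ∈ s, (p : ℝ) ^ (a - b i)) / (p : ℝ) ^ a := by
    rw [Finset.sum_div]
    apply Finset.sum_congr rfl
    intro i hi
    rw [(hb i hi).2]
    push_cast
    rw [pow_sub₀ _ hp0.ne' (hb i hi).1]
    field_simp
  have e2 : ∑ k, (1 - ((p : ℝ) ^ min (m k) a)⁻¹) =
      (∑ k, ((p : ℝ) ^ min (m k) a - 1) * (p : ℝ) ^ (a - min (m k) a)) / (p : ℝ) ^ a := by
    rw [Finset.sum_div]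
    apply Finset.sum_congr rfl
    intro k _
    rw [pow_sub₀ _ hp0.ne' (min_le_right _ _)]
    field_simp
  rw [e1, e2]
  gcongr

lemma zsf_pgroup_full {p : ℕ} (hp : p.Prime) {H ι I : Type*} [AddCommGroup H] [Fintype ι]
    {e : ι → H} {m : ι → ℕ} (h : PB p e m) (s : Finset I) (F : I → H) (hz : ZSF s F) :
    ∑ i ∈ s, ((addOrderOf (F i) : ℝ))⁻¹ ≤ ∑ k, (1 - ((p : ℝ) ^ m k)⁻¹) := by
  refine (zsf_pgroup hp h s F (∑ k, m k) (fun i _ => h.order _) hz).trans (le_of_eq ?_)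
  apply Finset.sum_congr rfl
  intro k _
  rw [min_eq_left (Finset.single_le_sum (fun _ _ => Nat.zero_le _) (Finset.mem_univ k))]

lemma zsf_lt_card {p : ℕ} (hp : p.Prime) {H ι I : Type*} [AddCommGroup H] [Fintype ι] [Nonempty ι]
    {e : ι → H} {m : ι → ℕ} (h : PB p e m) (s : Finset I) (F : I → H) (hz : ZSF s F) :
    ∑ i ∈ s, ((addOrderOf (F i) : ℝ))⁻¹ < Fintype.card ι := by
  refine (zsf_pgroup_full hp h s F hz).trans_lt ?_
  have hp0 : (0 : ℝ) < p := by exact_mod_cast hp.pos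
  calc ∑ k, (1 - ((p : ℝ) ^ m k)⁻¹) < ∑ k : ι, (1 : ℝ) := by
        apply Finset.sum_lt_sum_of_nonempty Finset.univ_nonempty
        intro k _
        have : (0 : ℝ) < ((p : ℝ) ^ m k)⁻¹ := by positivity
        linarith
    _ = _ := by simp

lemma erase_not_zsf {p : ℕ} (hp : p.Prime) {H ι I : Type*} [AddCommGroup H] [Fintype ι]
    [DecidableEq I]
    {e : ι → H} {m : ι → ℕ} (h : PB p e m) (hc : 2 ≤ Fintype.card ι)
    (s : Finset I) (hs : s.Nonempty) (F : I → H)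
    (hk : (Fintype.card ι : ℝ) ≤ ∑ i ∈ s, ((addOrderOf (F i) : ℝ))⁻¹) :
    ∃ i ∈ s, ¬ ZSF (s.erase i) F := by
  obtain ⟨j, hj, hmax⟩ := Finset.exists_max_image s (fun i => addOrderOf (F i)) hs
  refine ⟨j, hj, fun hz => ?_⟩
  have hp0 : (0 : ℝ) < p := by exact_mod_cast hp.pos
  have hp1 : (1 : ℝ) ≤ p := by exact_mod_cast hp.one_le
  obtain ⟨a, -, haj⟩ := (Nat.dvd_prime_pow hp).1 (h.order (F j))
  have := zsf_pgroup hp h (s.erase j) F a (by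
    intro i hi
    obtain ⟨b, -, hb⟩ := (Nat.dvd_prime_pow hp).1 (h.order (F i))
    have := hmax i (Finset.mem_of_mem_erase hi)
    rw [hb, haj] at this
    rw [hb]
    exact pow_dvd_pow _ ((Nat.pow_le_pow_iff_right hp.one_lt).1 this)) hz
  rw [← Finset.add_sum_erase s _ hj, haj] at hk
  push_cast at hk
  have h2 : ∑ k, (1 - ((p : ℝ) ^ min (m k) a)⁻¹) ≤ ∑ k : ι, (1 - ((p : ℝ) ^ a)⁻¹) := by
    apply Finset.sum_le_sum
    intro k _
    have : ((p : ℝ) ^ a)⁻¹ ≤ ((p : ℝ) ^ min (m k) a)⁻¹ := by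
      apply inv_anti₀ (by positivity)
      exact pow_le_pow_right₀ hp1 (min_le_right _ _)
    linarith
  simp only [Finset.sum_const, Finset.card_univ, nsmul_eq_mul] at h2
  have h3 : (0 : ℝ) < ((p : ℝ) ^ a)⁻¹ := by positivity
  have h4 : (2 : ℝ) ≤ Fintype.card ι := by exact_mod_cast hc
  nlinarith

lemma not_zsf {I H : Type*} [AddCommGroup H] {s : Finset I} {F : I → H} (h : ¬ ZSF s F) :
    ∃ t ⊆ s, t.Nonempty ∧ ∑ i ∈ t, F i = 0 := by
  unfold ZSF at h
  push Not at h
  exact h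

lemma short_zs {p : ℕ} (hp : p.Prime) {H ι I : Type*} [AddCommGroup H] [Fintype ι]
    {e : ι → H} {m : ι → ℕ} (h : PB p e m) (hc : Fintype.card ι = 2)
    (W : Finset I) (f : I → H)
    (hk : (3 : ℝ) ≤ ∑ i ∈ W, ((addOrderOf (f i) : ℝ))⁻¹) :
    ∃ T ⊆ W, T.Nonempty ∧ ∑ i ∈ T, f i = 0 ∧ ∑ i ∈ T, ((addOrderOf (f i) : ℝ))⁻¹ ≤ 1 := by
  classical
  set N := ∑ k, m k with hN
  have hp0 : (0 : ℝ) < p := by exact_mod_cast hp.pos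
  have hord : ∀ i, ∃ b ≤ N, addOrderOf (f i) = p ^ b := fun i =>
    (Nat.dvd_prime_pow hp).1 (h.order (f i))
  choose b hbN hb using hord
  let F : I → H × ZMod (p ^ N) := fun i => (f i, ((p ^ (N - b i) : ℕ) : ZMod (p ^ N)))
  have hPB := h.prod (PB.zmod p N hp)
  have hF : ∀ i, addOrderOf (F i) = addOrderOf (f i) := by
    intro i
    rw [Prod.addOrderOf]
    apply Nat.lcm_eq_left
    rw [addOrderOf_dvd_iff_nsmul_eq_zero, hb]
    simp only [F]
    rw [nsmul_eq_mul, ← Nat.cast_mul, ← pow_add, Nat.add_sub_of_le (hbN i), ZMod.natCast_self]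
  have hcard : Fintype.card (ι ⊕ Unit) = 3 := by simp [hc]
  have hex : ¬ ZSF W F := by
    intro hz
    have := zsf_lt_card hp hPB W F hz
    rw [hcard] at this
    simp only [hF] at this
    push_cast at this
    linarith
  obtain ⟨T₀, hT₀W, hT₀ne, hT₀⟩ := not_zsf hex
  obtain ⟨T, hT, hmin⟩ := Finset.exists_min_image
    (W.powerset.filter fun T => T.Nonempty ∧ ∑ i ∈ T, F i = 0) Finset.card
    ⟨T₀, by simp [hT₀W, hT₀ne, hT₀]⟩
  simp only [mem_filter, mem_powerset] at hT hmin
  obtain ⟨hTW, hTne, hTs⟩ := hT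
  have hTf : ∑ i ∈ T, f i = 0 := by
    have := congrArg Prod.fst hTs
    simpa [Prod.fst_sum, F] using this
  have hlt : ∑ i ∈ T, ((addOrderOf (f i) : ℝ))⁻¹ < 3 := by
    by_contra! hge
    obtain ⟨i, hi, hnz⟩ := erase_not_zsf hp hPB (by rw [hcard]; norm_num) T hTne F (by
      rw [hcard]; simp only [hF]; exact_mod_cast hge)
    obtain ⟨t, ht, htne, hts⟩ := not_zsf hnz
    have h1 := hmin t ⟨(ht.trans (erase_subset _ _)).trans hTW, htne, hts⟩
    have h2 := card_le_card ht
    rw [card_erase_of_mem hi] at h2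
    have := card_pos.2 hTne
    omega
  -- the cross number of `T` is an integer
  have hint : ∃ z : ℕ, ∑ i ∈ T, ((addOrderOf (f i) : ℝ))⁻¹ = z := by
    have h1 := congrArg Prod.snd hTs
    simp only [Prod.snd_sum, F, Prod.snd_zero] at h1
    rw [← Nat.cast_sum, ZMod.natCast_eq_zero_iff] at h1
    obtain ⟨z, hz⟩ := h1
    refine ⟨z, ?_⟩
    have hz' : ∑ i ∈ T, (p : ℝ) ^ (N - b i) = (p : ℝ) ^ N * z := by exact_mod_cast hz
    have hpN : (p : ℝ) ^ N ≠ 0 := by positivity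
    apply mul_left_cancel₀ hpN
    rw [← hz', Finset.mul_sum]
    apply Finset.sum_congr rfl
    intro i _
    rw [hb, pow_sub₀ _ hp0.ne' (hbN i)]
    push_cast
    rfl
  obtain ⟨z, hz⟩ := hint
  rw [hz] at hlt
  have hz3 : z < 3 := by exact_mod_cast hlt
  by_cases hz1 : z ≤ 1
  · exact ⟨T, hTW, hTne, hTf, by rw [hz]; exact_mod_cast hz1⟩
  · have hz2 : z = 2 := by omega
    obtain ⟨i, hi, hnz⟩ := erase_not_zsf hp h (by rw [hc]) T hTne f (by
      rw [hc, hz, hz2])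
    obtain ⟨t, ht, htne, hts⟩ := not_zsf hnz
    have htT : t ⊆ T := ht.trans (erase_subset _ _)
    have hsd := Finset.sum_sdiff (f := fun i => ((addOrderOf (f i) : ℝ))⁻¹) htT
    have hsd' := Finset.sum_sdiff (f := f) htT
    rw [hz, hz2] at hsd
    push_cast at hsd
    by_cases hle : ∑ i ∈ t, ((addOrderOf (f i) : ℝ))⁻¹ ≤ 1
    · exact ⟨t, htT.trans hTW, htne, hts, hle⟩
    · refine ⟨T \ t, sdiff_subset.trans hTW, ⟨i, ?_⟩, ?_, ?_⟩
      · rw [mem_sdiff]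
        exact ⟨hi, fun hh => (mem_erase.1 (ht hh)).1 rfl⟩
      · rw [hts, hTf, add_zero] at hsd'
        exact hsd'
      · linarith

lemma ext_family {p : ℕ} (hp : p.Prime) {H ι I : Type*} [AddCommGroup H] [Fintype ι]
    {e : ι → H} {m : ι → ℕ} (hB : PB p e m) (hc : Fintype.card ι = 2)
    (h : I → H) (c : ℕ) (W : Finset I) :
    ∃ 𝒯 : Finset (Finset I), (∀ T ∈ 𝒯, T ⊆ W ∧ T.Nonempty ∧ p ^ c • ∑ i ∈ T, h i = 0) ∧
      (𝒯 : Set (Finset I)).PairwiseDisjoint id ∧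
      ∑ i ∈ W, ((addOrderOf (h i) : ℝ))⁻¹ ≤ 2 * ((p : ℝ) ^ c)⁻¹ + #𝒯 := by
  classical
  have hp0 : (0 : ℝ) < p := by exact_mod_cast hp.pos
  have hp1 : (1 : ℝ) ≤ p := by exact_mod_cast hp.one_le
  have hq0 : (0 : ℝ) < ((p : ℝ) ^ c)⁻¹ := by positivity
  have hq1 : ((p : ℝ) ^ c)⁻¹ ≤ 1 := inv_le_one_of_one_le₀ (one_le_pow₀ hp1)
  induction W using Finset.strongInduction with
  | H W ih =>
  have step : (∃ T ⊆ W, T.Nonempty ∧ p ^ c • ∑ i ∈ T, h i = 0 ∧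
      ∑ i ∈ T, ((addOrderOf (h i) : ℝ))⁻¹ ≤ 1) →
    ∃ 𝒯 : Finset (Finset I), (∀ T ∈ 𝒯, T ⊆ W ∧ T.Nonempty ∧ p ^ c • ∑ i ∈ T, h i = 0) ∧
      (𝒯 : Set (Finset I)).PairwiseDisjoint id ∧
      ∑ i ∈ W, ((addOrderOf (h i) : ℝ))⁻¹ ≤ 2 * ((p : ℝ) ^ c)⁻¹ + #𝒯 := by
    rintro ⟨T, hTW, hTne, hTs, hTk⟩
    obtain ⟨𝒯, h1, h2, h3⟩ := ih (W \ T) (sdiff_ssubset hTW hTne)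
    have hdis : ∀ T' ∈ 𝒯, Disjoint T T' := fun T' hT' =>
      (disjoint_sdiff (s := T) (t := W)).mono_right (h1 T' hT').1
    have hnot : T ∉ 𝒯 := by
      intro hh
      have := hdis T hh
      rw [disjoint_self] at this
      exact hTne.ne_empty this
    refine ⟨insert T 𝒯, ?_, ?_, ?_⟩
    · intro T' hT'
      rcases mem_insert.1 hT' with rfl | hT'
      · exact ⟨hTW, hTne, hTs⟩
      · exact ⟨(h1 T' hT').1.trans sdiff_subset, (h1 T' hT').2⟩
    · rw [coe_insert]
      refine h2.insert ?_
      intro T' hT' _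
      exact hdis T' hT'
    · rw [card_insert_of_notMem hnot, ← Finset.sum_sdiff hTW]
      push_cast
      linarith
  by_cases hex : ∃ i ∈ W, p ^ c • h i = 0
  · obtain ⟨i, hi, hi0⟩ := hex
    apply step
    refine ⟨{i}, by simpa using hi, by simp, by simpa using hi0, ?_⟩
    simp only [sum_singleton]
    exact Nat.cast_inv_le_one _
  push Not at hex
  have hordq : ∀ i ∈ W, ((addOrderOf (h i) : ℝ))⁻¹ =
      ((p : ℝ) ^ c)⁻¹ * ((addOrderOf (p ^ c • h i) : ℝ))⁻¹ := by
    intro i hi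
    obtain ⟨b, -, hb⟩ := (Nat.dvd_prime_pow hp).1 (hB.order (h i))
    have hcb : c ≤ b := by
      by_contra! hlt
      apply hex i hi
      rw [← addOrderOf_dvd_iff_nsmul_eq_zero, hb]
      exact pow_dvd_pow _ hlt.le
    have : addOrderOf (p ^ c • h i) * p ^ c = addOrderOf (h i) := by
      rw [addOrderOf_nsmul' _ (pow_pos hp.pos _).ne', hb,
        Nat.gcd_eq_right (pow_dvd_pow _ hcb), Nat.div_mul_cancel (pow_dvd_pow _ hcb)]
    rw [← this]
    push_cast
    rw [mul_inv, mul_comm]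
  have hsumq : ∀ T ⊆ W, ∑ i ∈ T, ((addOrderOf (h i) : ℝ))⁻¹ =
      ((p : ℝ) ^ c)⁻¹ * ∑ i ∈ T, ((addOrderOf (p ^ c • h i) : ℝ))⁻¹ := by
    intro T hT
    rw [Finset.mul_sum]
    exact Finset.sum_congr rfl fun i hi => hordq i (hT hi)
  have hne : Nonempty ι := Fintype.card_pos_iff.1 (by omega)
  by_cases hk2 : ∑ i ∈ W, ((addOrderOf (p ^ c • h i) : ℝ))⁻¹ < 2
  · refine ⟨∅, by simp, by simp, ?_⟩
    rw [hsumq W (Subset.refl _)]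
    simp only [card_empty, Nat.cast_zero, add_zero]
    nlinarith
  push Not at hk2
  by_cases hk3 : ∑ i ∈ W, ((addOrderOf (p ^ c • h i) : ℝ))⁻¹ < 3
  · have hnz : ¬ ZSF W (fun i => p ^ c • h i) := by
      intro hz
      have := zsf_lt_card hp hB W _ hz
      rw [hc] at this
      push_cast at this
      linarith
    obtain ⟨T, hTW, hTne, hTs⟩ := not_zsf hnz
    refine ⟨{T}, ?_, by simp, ?_⟩
    · simp only [mem_singleton]
      rintro _ rfl
      exact ⟨hTW, hTne, by rw [Finset.smul_sum]; exact hTs⟩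
    · rw [hsumq W (Subset.refl _)]
      simp only [card_singleton, Nat.cast_one]
      nlinarith
  push Not at hk3
  obtain ⟨T, hTW, hTne, hTs, hTk⟩ := short_zs hp hB hc W (fun i => p ^ c • h i) hk3
  apply step
  refine ⟨T, hTW, hTne, by rw [Finset.smul_sum]; exact hTs, ?_⟩
  rw [hsumq T hTW]
  have : (0 : ℝ) ≤ ∑ i ∈ T, ((addOrderOf (p ^ c • h i) : ℝ))⁻¹ :=
    Finset.sum_nonneg fun _ _ => by positivity
  nlinarith

lemma le_map_lift {α β : Type*} (f : α → β) (S : Multiset α) :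
    ∀ T : Multiset β, T ≤ S.map f → ∃ S' ≤ S, T = S'.map f := by
  classical
  induction S using Multiset.induction_on with
  | empty => intro T hT; exact ⟨0, le_refl _, by simpa using hT⟩
  | cons a S ih =>
    intro T hT
    rw [Multiset.map_cons] at hT
    by_cases ha : f a ∈ T
    · obtain ⟨T', rfl⟩ := Multiset.exists_cons_of_mem ha
      rw [Multiset.cons_le_cons_iff] at hT
      obtain ⟨S', h1, rfl⟩ := ih T' hT
      exact ⟨a ::ₘ S', (Multiset.cons_le_cons_iff a).2 h1, by simp⟩
    · obtain ⟨S', h1, rfl⟩ := ih T ((Multiset.le_cons_of_notMem ha).1 hT)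
      exact ⟨S', h1.trans (Multiset.le_cons_self _ _), rfl⟩

lemma bdd_littleK (G : Type*) [AddCommGroup G] [Finite G] :
    BddAbove {x : ℝ | ∃ S : Multiset G, IsZeroSumFree S ∧ crossNum S = x} := by
  classical
  have := Fintype.ofFinite G
  refine ⟨∑ g : G, (addOrderOf g : ℝ), ?_⟩
  rintro x ⟨S, hS, rfl⟩
  have h1 : crossNum S = ∑ g : G, (S.count g : ℝ) * ((addOrderOf g : ℝ))⁻¹ := by
    unfold crossNum
    rw [Finset.sum_multiset_map_count]
    rw [Finset.sum_subset (Finset.subset_univ S.toFinset)]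
    · simp
    · intro g _ hg
      simp at hg
      simp [hg]
  rw [h1]
  apply Finset.sum_le_sum
  intro g _
  have h2 : S.count g ≤ addOrderOf g := by
    by_contra! hlt
    have h3 := Multiset.le_count_iff_replicate_le.1 hlt.le
    refine hS _ h3 ?_ ?_
    · intro h0
      have := congrArg Multiset.card h0
      simp at this
      exact (addOrderOf_pos g).ne' (by simpa using this)
    · simp [addOrderOf_nsmul_eq_zero]
  calc (S.count g : ℝ) * ((addOrderOf g : ℝ))⁻¹ ≤ (addOrderOf g : ℝ) * 1 := by
        gcongr
        exact Nat.cast_inv_le_one _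
    _ = _ := mul_one _

lemma zsf_le_littleK {G I : Type*} [AddCommGroup G] [Finite G] (V : Finset I) (x : I → G)
    (hz : ZSF V x) : ∑ i ∈ V, ((addOrderOf (x i) : ℝ))⁻¹ ≤ littleK G := by
  apply le_csSup (bdd_littleK G)
  refine ⟨V.val.map x, ?_, ?_⟩
  · intro T hT hT0
    obtain ⟨t, ht, rfl⟩ := le_map_lift x V.val T hT
    have hn : t.Nodup := Multiset.nodup_of_le ht V.nodup
    have := hz ⟨t, hn⟩ (by rw [← Finset.val_le_iff]; exact ht) (by
      rw [Finset.nonempty_iff_ne_empty]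
      intro h0
      have := congrArg Finset.val h0
      simp at this
      simp [this] at hT0)
    exact this
  · unfold crossNum
    rw [Multiset.map_map]
    rfl

lemma zsf_of_multiset {K : Type*} [AddCommGroup K] [DecidableEq K] (S : Multiset K)
    (hS : IsZeroSumFree S) :
    ZSF (Finset.univ : Finset S.ToType) (fun i => (i.1 : K)) := by
  intro t ht hne h0
  refine hS (t.val.map fun i : S.ToType => (i.1 : K)) ?_ ?_ h0
  · conv_rhs => rw [← Multiset.map_univ_coe S]
    exact Multiset.map_le_map (Finset.val_le_iff.2 ht)
  · intro h
    have := congrArg Multiset.card h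
    simp at this
    exact hne.ne_empty this

lemma lower_prod {H H' : Type*} [AddCommGroup H] [AddCommGroup H'] (A : Multiset H)
    (B : Multiset H') (hA : IsZeroSumFree A) (hB : IsZeroSumFree B) :
    ∃ S : Multiset (H × H'), IsZeroSumFree S ∧ crossNum S = crossNum A + crossNum B := by
  classical
  refine ⟨A.map (fun a => (a, (0 : H'))) + B.map (fun b => ((0 : H), b)), ?_, ?_⟩
  · intro T hT hT0 hsum
    set A1 := A.map (fun a => (a, (0 : H')))
    have hsplit : T - A1 + T ∩ A1 = T := Multiset.sub_add_inter T A1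
    obtain ⟨A', hA', e1⟩ := le_map_lift _ A (T ∩ A1) (Multiset.inter_le_right)
    obtain ⟨B', hB', e2⟩ := le_map_lift _ B (T - A1) (by
      rw [tsub_le_iff_left]; exact hT)
    rw [e1, e2] at hsplit
    rw [← hsplit, Multiset.sum_add] at hsum
    have f1 : ((B'.map (fun b => ((0 : H), b))).sum) = (0, B'.sum) := by
      exact Multiset.sum_hom B' (AddMonoidHom.inr H H')
    have f2 : ((A'.map (fun a => (a, (0 : H')))).sum) = (A'.sum, 0) := by
      exact Multiset.sum_hom A' (AddMonoidHom.inl H H')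
    rw [f1, f2] at hsum
    simp only [Prod.mk_add_mk, zero_add, add_zero, Prod.mk_eq_zero] at hsum
    have hA0 : A' = 0 := by
      by_contra h; exact hA A' hA' h hsum.1
    have hB0 : B' = 0 := by
      by_contra h; exact hB B' hB' h hsum.2
    apply hT0
    rw [← hsplit, hA0, hB0]
    simp
  · simp [crossNum, Multiset.map_map, Function.comp_def, Prod.addOrderOf]

lemma lower_zmod (q : ℕ) (hq : 0 < q) : ∃ S : Multiset (ZMod q), IsZeroSumFree S ∧
    crossNum S = 1 - ((q : ℝ))⁻¹ := by
  refine ⟨Multiset.replicate (q - 1) 1, ?_, ?_⟩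
  · intro T hT hT0 hs
    obtain ⟨k, hk, rfl⟩ := Multiset.le_replicate_iff.1 hT
    simp only [Multiset.sum_replicate, nsmul_eq_mul, mul_one] at hs
    rw [ZMod.natCast_eq_zero_iff] at hs
    have hk0 : k ≠ 0 := by rintro rfl; simp at hT0
    have := Nat.le_of_dvd (Nat.pos_of_ne_zero hk0) hs
    omega
  · simp only [crossNum, Multiset.map_replicate, Multiset.sum_replicate, ZMod.addOrderOf_one,
      nsmul_eq_mul]
    rw [Nat.cast_sub hq]
    have : (q : ℝ) ≠ 0 := by positivity
    field_simp
    simp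

lemma main_upper {p : ℕ} (hp : p.Prime) {H ι I G : Type*} [AddCommGroup H] [Fintype ι]
    {e : ι → H} {m : ι → ℕ} (hB : PB p e m) (hc : Fintype.card ι = 2)
    [AddCommGroup G] [Finite G] (h2 : TwoSmall p (AddMonoid.exponent G))
    (s : Finset I) (h : I → H) (x : I → G) (hz : ZSF s (fun i => (h i, x i))) :
    ∑ i ∈ s, ((addOrderOf (h i) : ℝ) * addOrderOf (x i))⁻¹ ≤
      ∑ k, (1 - ((p : ℝ) ^ m k)⁻¹) + littleK G := by
  classical
  have hp0 : (0 : ℝ) < p := by exact_mod_cast hp.pos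
  set U := s.filter (fun i => x i = 0) with hU
  set V := s.filter (fun i => ¬ x i = 0) with hV
  have hsplit := Finset.sum_filter_add_sum_filter_not s (fun i => x i = 0)
    (fun i => ((addOrderOf (h i) : ℝ) * addOrderOf (x i))⁻¹)
  rw [← hsplit, ← hU, ← hV]
  have hUs : ∑ i ∈ U, ((addOrderOf (h i) : ℝ) * addOrderOf (x i))⁻¹ =
      ∑ i ∈ U, ((addOrderOf (h i) : ℝ))⁻¹ := by
    apply Finset.sum_congr rfl
    intro i hi
    rw [(mem_filter.1 hi).2]
    simp
  rw [hUs]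
  have hUz : ZSF U h := by
    intro t ht hne h0
    apply hz t (ht.trans (filter_subset _ _)) hne
    ext
    · simpa [Prod.fst_sum] using h0
    · simp only [Prod.snd_sum, Prod.snd_zero]
      exact Finset.sum_eq_zero fun i hi => (mem_filter.1 (ht hi)).2
  have hUV : Disjoint U V := disjoint_filter_filter_not _ _ _
  -- combining
  have hcomb : ∀ t ⊆ V, t.Nonempty → ∑ i ∈ t, x i = 0 →
      ¬ ∃ u ⊆ U, ∑ i ∈ u, h i = - ∑ i ∈ t, h i := by
    rintro t ht hne h0 ⟨u, hu, hus⟩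
    have hd : Disjoint u t := hUV.mono hu ht
    apply hz (u ∪ t) (union_subset (hu.trans (filter_subset _ _)) (ht.trans (filter_subset _ _)))
      (hne.mono subset_union_right)
    rw [sum_union hd]
    ext
    · simp [Prod.fst_sum, hus]
    · simp only [Prod.snd_sum, Prod.snd_zero, Prod.snd_add, h0, add_zero]
      exact Finset.sum_eq_zero fun i hi => (mem_filter.1 (hu hi)).2
  by_cases hall : ∀ g : H, ∃ u ⊆ U, ∑ i ∈ u, h i = g
  · have hVz : ZSF V x := fun t ht hne h0 => hcomb t ht hne h0 (hall _)
    have h3 := zsf_le_littleK V x hVz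
    have h4 := zsf_pgroup_full hp hB U h hUz
    have h5 : ∑ i ∈ V, ((addOrderOf (h i) : ℝ) * addOrderOf (x i))⁻¹ ≤
        ∑ i ∈ V, ((addOrderOf (x i) : ℝ))⁻¹ := by
      apply Finset.sum_le_sum
      intro i _
      rw [mul_inv]
      have h6 : ((addOrderOf (h i) : ℝ))⁻¹ ≤ 1 := Nat.cast_inv_le_one _
      have h7 : (0 : ℝ) ≤ ((addOrderOf (x i) : ℝ))⁻¹ := by positivity
      exact mul_le_of_le_one_left h7 h6
    linarith
  -- a missing element of minimal order
  push Not at hall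
  have hexn : ∃ n : ℕ, ∃ g : H, addOrderOf g = n ∧ ∀ u ⊆ U, ∑ i ∈ u, h i ≠ g := by
    obtain ⟨g, hg⟩ := hall
    exact ⟨_, g, rfl, hg⟩
  obtain ⟨g, hgo, hg⟩ := Nat.find_spec hexn
  have hmin : ∀ g' : H, addOrderOf g' < addOrderOf g → ∃ u ⊆ U, ∑ i ∈ u, h i = g' := by
    intro g' hg'
    rw [hgo] at hg'
    have := Nat.find_min hexn hg'
    push Not at this
    exact this g' rfl
  obtain ⟨c', -, hc'⟩ := (Nat.dvd_prime_pow hp).1 (hB.order g)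
  have hc0 : c' ≠ 0 := by
    rintro rfl
    rw [pow_zero, AddMonoid.addOrderOf_eq_one_iff] at hc'
    exact hg ∅ (empty_subset _) (by simp [hc'])
  obtain ⟨c, rfl⟩ := Nat.exists_eq_succ_of_ne_zero hc0
  have hQ : ∀ g' : H, p ^ c • g' = 0 → ∃ u ⊆ U, ∑ i ∈ u, h i = g' := by
    intro g' hg'
    apply hmin
    rw [← addOrderOf_dvd_iff_nsmul_eq_zero] at hg'
    rw [hc']
    exact (Nat.le_of_dvd (pow_pos hp.pos _) hg').trans_lt
      (Nat.pow_lt_pow_right hp.one_lt (Nat.lt_succ_self c))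
  -- bound for `U`
  have hUb : ∑ i ∈ U, ((addOrderOf (h i) : ℝ))⁻¹ + ((p : ℝ) ^ (c + 1))⁻¹ ≤
      ∑ k, (1 - ((p : ℝ) ^ m k)⁻¹) := by
    have hz' : ZSF (insertNone U) (fun o : Option I => o.elim (-g) h) := by
      intro t ht hne h0
      by_cases hn : none ∈ t
      · have ht' : t = insertNone (eraseNone t) := by
          ext o
          cases o with
          | none => simp [hn]
          | some i => simp
        rw [ht', sum_insertNone] at h0
        simp only [Option.elim] at h0
        apply hg (eraseNone t) _ (by rwa [neg_add_eq_zero, eq_comm] at h0)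
        intro i hi
        have := ht (mem_eraseNone.1 hi)
        simpa using this
      · have ht' : t = (eraseNone t).map Function.Embedding.some := by
          ext o
          cases o with
          | none => simp [hn]
          | some i => simp
        rw [ht'] at h0 hne
        rw [sum_map] at h0
        refine hUz (eraseNone t) ?_ (Finset.map_nonempty.1 hne) (by simpa using h0)
        intro i hi
        have := ht (mem_eraseNone.1 hi)
        simpa using this
    have := zsf_pgroup_full hp hB _ _ hz'
    rw [sum_insertNone] at this
    simp only [Option.elim, addOrderOf_neg, hc'] at this
    push_cast at this
    rw [add_comm]
    exact this
  -- bound for `V`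
  set n := AddMonoid.exponent G with hn
  have hn0 : n ≠ 0 := AddMonoid.exponent_ne_zero_of_finite
  set D := n.divisors.erase 1 with hD
  have hDs : ∑ d ∈ D, ((d : ℝ))⁻¹ < (2 * (p : ℝ) + 1)⁻¹ := by
    have h3 := h2.2
    have h1 : 1 ∈ n.divisors := by simp [hn0]
    rw [← Finset.add_sum_erase _ _ h1, ← hD] at h3
    have h3' : ((1 : ℝ) / (1 : ℕ) + ∑ d ∈ D, (1 : ℝ) / d) < (2 * p + 2) / (2 * p + 1) := by
      have h3q : (((1 : ℚ) / (1 : ℕ) + ∑ d ∈ D, (1 : ℚ) / d : ℚ) : ℝ) <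
          (((2 * p + 2) / (2 * p + 1) : ℚ) : ℝ) := Rat.cast_lt.2 h3
      push_cast at h3q ⊢
      exact h3q
    simp only [one_div] at h3'
    have h4 : ((2 : ℝ) * p + 2) / (2 * p + 1) = 1 + (2 * (p : ℝ) + 1)⁻¹ := by
      field_simp; ring
    rw [h4] at h3'
    simp only [Nat.cast_one, inv_one] at h3'
    linarith
  choose 𝒯 hT1 hT2 hT3 using fun d : ℕ =>
    ext_family hp hB hc h c (V.filter fun i => addOrderOf (x i) = d)
  have hmaps : ∀ i ∈ V, addOrderOf (x i) ∈ D := by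
    intro i hi
    rw [hD, mem_erase, Nat.mem_divisors]
    refine ⟨?_, AddMonoid.addOrder_dvd_exponent _, hn0⟩
    rw [Ne, AddMonoid.addOrderOf_eq_one_iff]
    exact (mem_filter.1 hi).2
  have hVsum : ∑ i ∈ V, ((addOrderOf (h i) : ℝ) * addOrderOf (x i))⁻¹ ≤
      ∑ d ∈ D, (2 * ((p : ℝ) ^ c)⁻¹ + #(𝒯 d)) * (d : ℝ)⁻¹ := by
    rw [← Finset.sum_fiberwise_of_maps_to hmaps]
    apply Finset.sum_le_sum
    intro d _
    have : ∑ i ∈ V.filter (fun i => addOrderOf (x i) = d),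
        ((addOrderOf (h i) : ℝ) * addOrderOf (x i))⁻¹ =
        (∑ i ∈ V.filter (fun i => addOrderOf (x i) = d), ((addOrderOf (h i) : ℝ))⁻¹) *
          (d : ℝ)⁻¹ := by
      rw [Finset.sum_mul]
      apply Finset.sum_congr rfl
      intro i hi
      rw [(mem_filter.1 hi).2, mul_inv]
    rw [this]
    have := hT3 d
    gcongr
  have hTV : ∀ d, ∀ T ∈ 𝒯 d, T ⊆ V := fun d T hT => (hT1 d T hT).1.trans (filter_subset _ _)
  -- different `d` give disjoint sets
  have hdd : ∀ d d', d ≠ d' → ∀ T ∈ 𝒯 d, ∀ T' ∈ 𝒯 d', Disjoint T T' := by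
    intro d d' hne T hT T' hT'
    rw [Finset.disjoint_left]
    intro i hi hi'
    have a1 := (mem_filter.1 ((hT1 d T hT).1 hi)).2
    have a2 := (mem_filter.1 ((hT1 d' T' hT').1 hi')).2
    exact hne (a1.symm.trans a2)
  have hdisT : ((D.biUnion 𝒯 : Finset (Finset I)) : Set (Finset I)).PairwiseDisjoint id := by
    intro T hT T' hT' hne
    simp only [coe_biUnion, Set.mem_iUnion, mem_coe] at hT hT'
    obtain ⟨d, -, hT⟩ := hT
    obtain ⟨d', -, hT'⟩ := hT'
    by_cases hdd' : d = d'
    · subst hdd'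
      exact hT2 d hT hT' hne
    · exact hdd d d' hdd' T hT T' hT'
  have hzT : ZSF (D.biUnion 𝒯) (fun T => ∑ i ∈ T, x i) := by
    intro 𝒮 h𝒮 hne h0
    have hdS : (𝒮 : Set (Finset I)).PairwiseDisjoint id :=
      hdisT.subset (by exact_mod_cast h𝒮)
    have hprop : ∀ T ∈ 𝒮, T ⊆ V ∧ T.Nonempty ∧ p ^ c • ∑ i ∈ T, h i = 0 := by
      intro T hT
      obtain ⟨d, -, hd⟩ := mem_biUnion.1 (h𝒮 hT)
      exact ⟨hTV d T hd, (hT1 d T hd).2⟩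
    refine hcomb (𝒮.biUnion id) ?_ ?_ ?_ (hQ _ ?_)
    · exact biUnion_subset.2 fun T hT => (hprop T hT).1
    · obtain ⟨T, hT⟩ := hne
      exact (hprop T hT).2.1.mono (subset_biUnion_of_mem id hT)
    · rw [sum_biUnion hdS]
      exact h0
    · rw [sum_biUnion hdS, smul_neg, Finset.smul_sum, neg_eq_zero]
      exact Finset.sum_eq_zero fun T hT => (hprop T hT).2.2
  have hG := zsf_le_littleK _ _ hzT
  have hTG : ∑ d ∈ D, (#(𝒯 d) : ℝ) * (d : ℝ)⁻¹ ≤ littleK G := by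
    refine le_trans ?_ hG
    rw [sum_biUnion]
    · apply Finset.sum_le_sum
      intro d hd
      rw [← nsmul_eq_mul]
      apply Finset.card_nsmul_le_sum
      intro T hT
      have hdv : addOrderOf (∑ i ∈ T, x i) ∣ d := by
        rw [addOrderOf_dvd_iff_nsmul_eq_zero, Finset.smul_sum]
        apply Finset.sum_eq_zero
        intro i hi
        rw [← addOrderOf_dvd_iff_nsmul_eq_zero, (mem_filter.1 ((hT1 d T hT).1 hi)).2]
      have hd0 : 0 < d := Nat.pos_of_mem_divisors (mem_of_mem_erase hd)
      apply inv_anti₀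
      · exact_mod_cast addOrderOf_pos _
      · exact_mod_cast Nat.le_of_dvd hd0 hdv
    · intro d _ d' _ hne
      rw [Function.onFun, Finset.disjoint_left]
      intro T hT hT'
      have := hdd d d' hne T hT T hT'
      rw [disjoint_self] at this
      exact (hT1 d T hT).2.1.ne_empty this
  have hfin : ∑ d ∈ D, (2 * ((p : ℝ) ^ c)⁻¹ + #(𝒯 d)) * (d : ℝ)⁻¹ =
      2 * ((p : ℝ) ^ c)⁻¹ * ∑ d ∈ D, (d : ℝ)⁻¹ + ∑ d ∈ D, (#(𝒯 d) : ℝ) * (d : ℝ)⁻¹ := by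
    rw [Finset.mul_sum, ← Finset.sum_add_distrib]
    apply Finset.sum_congr rfl
    intro d _
    ring
  have hlast : 2 * ((p : ℝ) ^ c)⁻¹ * ∑ d ∈ D, (d : ℝ)⁻¹ ≤ ((p : ℝ) ^ (c + 1))⁻¹ := by
    have hq0 : (0 : ℝ) < ((p : ℝ) ^ c)⁻¹ := by positivity
    have h8 : 2 * ∑ d ∈ D, (d : ℝ)⁻¹ ≤ (p : ℝ)⁻¹ := by
      have : 2 * (2 * (p : ℝ) + 1)⁻¹ ≤ (p : ℝ)⁻¹ := by
        rw [← div_eq_mul_inv, inv_eq_one_div, div_le_div_iff₀ (by positivity) hp0]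
        linarith
      linarith
    calc 2 * ((p : ℝ) ^ c)⁻¹ * ∑ d ∈ D, (d : ℝ)⁻¹
        = ((p : ℝ) ^ c)⁻¹ * (2 * ∑ d ∈ D, (d : ℝ)⁻¹) := by ring
      _ ≤ ((p : ℝ) ^ c)⁻¹ * (p : ℝ)⁻¹ := by gcongr
      _ = _ := by rw [pow_succ, mul_inv]
  linarith

end Helpers

/-- If `p` is a prime that is 2-small with respect to `exp(G)` and `k(G) = k*(G)`, then
`k(C_{p^m} ⊕ C_{p^n} ⊕ G) = k*(C_{p^m} ⊕ C_{p^n} ⊕ G)` for all positive `m, n`.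
Here `k*` is expressed via a decomposition of `G` into cyclic groups of prime-power
order `P i ^ A i`, so that `k*(G) = ∑ i, (1 - 1/(P i ^ A i))` and
`k*(C_{p^m} ⊕ C_{p^n} ⊕ G) = (1 - 1/p^m) + (1 - 1/p^n) + k*(G)`. -/
theorem littleK_eq_kStar_zmod_pow_prod_of_twoSmall
    (p : ℕ) (hp : p.Prime) (G : Type*) [AddCommGroup G] [Finite G]
    (h2 : TwoSmall p (AddMonoid.exponent G))
    (ι : Type*) [Fintype ι] (P A : ι → ℕ) (hP : ∀ i, (P i).Prime) (hA : ∀ i, 1 ≤ A i)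
    (e : G ≃+ (∀ i, ZMod (P i ^ A i)))
    (hG : littleK G = ∑ i, (1 - ((P i : ℝ) ^ A i)⁻¹))
    (m n : ℕ) (hm : 0 < m) (hn : 0 < n) :
    littleK (ZMod (p ^ m) × ZMod (p ^ n) × G)
      = (1 - ((p : ℝ) ^ m)⁻¹) + (1 - ((p : ℝ) ^ n)⁻¹)
          + ∑ i, (1 - ((P i : ℝ) ^ A i)⁻¹) := by
  classical
  have hlow : ∀ S : Multiset G, IsZeroSumFree S →
      ∃ S' : Multiset (ZMod (p ^ m) × ZMod (p ^ n) × G), IsZeroSumFree S' ∧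
        crossNum S' = (1 - ((p : ℝ) ^ m)⁻¹) + ((1 - ((p : ℝ) ^ n)⁻¹) + crossNum S) := by
    intro S hS
    obtain ⟨A1, hA1, cA1⟩ := lower_zmod (p ^ m) (pow_pos hp.pos _)
    obtain ⟨A2, hA2, cA2⟩ := lower_zmod (p ^ n) (pow_pos hp.pos _)
    obtain ⟨B, hB, cB⟩ := lower_prod A2 S hA2 hS
    obtain ⟨C, hC, cC⟩ := lower_prod A1 B hA1 hB
    refine ⟨C, hC, ?_⟩
    rw [cC, cB, cA1, cA2]
    push_cast
    rfl
  have hPB := (PB.zmod p m hp).prod (PB.zmod p n hp)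
  have hup : ∀ S : Multiset (ZMod (p ^ m) × ZMod (p ^ n) × G), IsZeroSumFree S →
      crossNum S ≤ (1 - ((p : ℝ) ^ m)⁻¹) + (1 - ((p : ℝ) ^ n)⁻¹) + littleK G := by
    intro S hS
    have hz := zsf_of_multiset S hS
    have key := main_upper hp hPB (by simp) h2 (Finset.univ : Finset S.ToType)
      (fun i => (i.1.1, i.1.2.1)) (fun i => i.1.2.2) (by
        intro t ht hne h0
        apply hz t ht hne
        have a1 := congrArg Prod.fst (congrArg Prod.fst h0)
        have a2 := congrArg Prod.snd (congrArg Prod.fst h0)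
        have a3 := congrArg Prod.snd h0
        simp only [Prod.fst_sum, Prod.snd_sum, Prod.fst_zero, Prod.snd_zero] at a1 a2 a3
        ext
        · simpa [Prod.fst_sum] using a1
        · simpa [Prod.fst_sum, Prod.snd_sum] using a2
        · simpa [Prod.snd_sum] using a3)
    have hcop : ∀ x : G, ∀ k, Nat.Coprime (p ^ k) (addOrderOf x) := by
      intro x k
      apply Nat.Coprime.pow_left
      rw [hp.coprime_iff_not_dvd]
      exact fun hd => h2.1 (hd.trans (AddMonoid.addOrder_dvd_exponent x))
    have hord : ∀ y : ZMod (p ^ m) × ZMod (p ^ n) × G,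
        addOrderOf y = addOrderOf (y.1, y.2.1) * addOrderOf y.2.2 := by
      intro y
      rw [Prod.addOrderOf y, Prod.addOrderOf y.2, Prod.addOrderOf (y.1, y.2.1), ← Nat.lcm_assoc]
      apply Nat.Coprime.lcm_eq_mul
      have h3 := hPB.order (y.1, y.2.1)
      rw [Prod.addOrderOf] at h3
      exact Nat.Coprime.coprime_dvd_left h3 (hcop _ _)
    have hcr : crossNum S = ∑ i : S.ToType, ((addOrderOf (i.1.1, i.1.2.1) : ℝ) *
        addOrderOf i.1.2.2)⁻¹ := by
      conv_lhs => rw [← Multiset.map_univ_coe S]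
      unfold crossNum
      rw [Multiset.map_map]
      apply Finset.sum_congr rfl
      intro i _
      simp only [Function.comp]
      rw [hord]
      push_cast
      rfl
    rw [hcr]
    refine key.trans (le_of_eq ?_)
    simp only [Fintype.sum_sum_type, Finset.univ_unique, Finset.sum_singleton, Sum.elim_inl,
      Sum.elim_inr]
  rw [← hG]
  have hne : ∀ (K : Type _) [AddCommGroup K],
      {x : ℝ | ∃ S : Multiset K, IsZeroSumFree S ∧ crossNum S = x}.Nonempty := by
    intro K _
    refine ⟨_, 0, ?_, rfl⟩
    intro T hT hT0
    exact absurd (Multiset.le_zero.1 hT) hT0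
  have hne' : {x : ℝ | ∃ S : Multiset (ZMod (p ^ m) × ZMod (p ^ n) × G),
      IsZeroSumFree S ∧ crossNum S = x}.Nonempty := by
    refine ⟨_, 0, ?_, rfl⟩
    intro T hT hT0
    exact absurd (Multiset.le_zero.1 hT) hT0
  apply le_antisymm
  · apply csSup_le hne'
    rintro x ⟨S, hS, rfl⟩
    exact hup S hS
  · have : littleK G ≤ littleK (ZMod (p ^ m) × ZMod (p ^ n) × G) -
        ((1 - ((p : ℝ) ^ m)⁻¹) + (1 - ((p : ℝ) ^ n)⁻¹)) := by
      apply csSup_le (hne G)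
      rintro x ⟨S, hS, rfl⟩
      obtain ⟨S', hS', hc⟩ := hlow S hS
      have h3 : crossNum S' ≤ littleK (ZMod (p ^ m) × ZMod (p ^ n) × G) := by
        apply le_csSup
        · refine ⟨(1 - ((p : ℝ) ^ m)⁻¹) + (1 - ((p : ℝ) ^ n)⁻¹) + littleK G, ?_⟩
          rintro x ⟨S, hS, rfl⟩
          exact hup S hS
        · exact ⟨S', hS', rfl⟩
      linarith
    linarith
end
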